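/- arXiv:2308.05469 — 5 statements merged into one kernel-verified Lean document; each statement's English description precedes it below -/
import Mathlib

section
/- Let α > −1 and let f, g be continuously differentiable functions on the closed unit ball of ℝ^d. Then ∫_{B^d} (D_{i,j} f)(x) conj(g(x)) (1−‖x‖²)^α dx = −∫_{B^d} f(x) conj((D_{i,j} g)(x)) (1−‖x‖²)^α dx, i.e., D_{i,j} is skew-adjoint with respect to the weighted inner product ⟨u,v⟩_α = ∫_{B^d} u conj(v) W_α dx with W_α(x) = (1−‖x‖²)^α. -/
/-!
`D_{i,j} = x_i ∂_j − x_j ∂_i` is the infinitesimal generator of the rotations `R_t` in the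
`(i,j)`-coordinate plane: `d/dt h (R_t x) = (D_{i,j} h) (R_t x)`. Since `R_t` preserves Lebesgue
measure, the ball and the radial weight `W_α`, the integral `∫ h (R_t x) W_α(x) dx` does not depend
on `t`; differentiating it at `t = 0` under the integral sign gives `∫ (D_{i,j} h) W_α = 0`
(`integral_Dop_eq_zero`). The domination needed is available because `D_{i,j} h` is bounded on the
ball (`exists_Dop_bound`) and `W_α` is integrable there for `α > −1` (`weight_integrableOn`).
Taking `h = f g` and using the Leibniz rule yields skew-adjointness. This argument makes no use of
boundary terms, so the blow-up of `W_α` on the sphere for `α < 0` is harmless.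
For `i = j` the operator vanishes identically.
-/

open MeasureTheory

/-- Partial derivative in the `i`-th coordinate direction. -/
noncomputable def pd {d : ℕ} (i : Fin d) (f : EuclideanSpace ℝ (Fin d) → ℝ)
    (x : EuclideanSpace ℝ (Fin d)) : ℝ :=
  fderiv ℝ f x (EuclideanSpace.single i 1)

/-- The angular differential operator `D_{i,j} = x_i ∂_j − x_j ∂_i`. -/
noncomputable def Dop {d : ℕ} (k l : Fin d) (f : EuclideanSpace ℝ (Fin d) → ℝ)
    (x : EuclideanSpace ℝ (Fin d)) : ℝ :=
  x k * pd l f x - x l * pd k f x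

/-- In polar coordinates this is the integrability of `r ^ (d - 1) * (1 + r) ^ α * (1 - r) ^ α` on
`(0, 1)`, where only the last factor can be unbounded. -/
lemma weight_integrableOn {d : ℕ} (hd : 1 ≤ d) (α : ℝ) (hα : -1 < α) :
    IntegrableOn (fun x : EuclideanSpace ℝ (Fin d) => (1 - ‖x‖ ^ 2) ^ α) (Metric.ball 0 1) := by
  have : Nonempty (Fin d) := ⟨⟨0, hd⟩⟩
  rw [integrableOn_fun_norm_addHaar volume (f := fun r : ℝ => (1 - r ^ 2) ^ α)]
  have h1 : IntegrableOn (fun y : ℝ => (1 - y) ^ α) (Set.Ioo 0 1) := by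
    have := (intervalIntegral.intervalIntegrable_rpow' (a := 1) (b := 0) hα).comp_sub_left 1
    simp only [sub_self, sub_zero] at this
    exact ((intervalIntegrable_iff_integrableOn_Ioo_of_le zero_le_one).1 this)
  rw [← integrableOn_Icc_iff_integrableOn_Ioo] at h1
  have hc : ContinuousOn
      (fun y : ℝ => y ^ (Module.finrank ℝ (EuclideanSpace ℝ (Fin d)) - 1) * (1 + y) ^ α)
      (Set.Icc 0 1) := by
    apply (by fun_prop : ContinuousOn _ _).mul
    refine ContinuousOn.rpow_const (by fun_prop) fun y hy => Or.inl ?_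
    linarith [hy.1]
  refine ((h1.continuousOn_mul hc isCompact_Icc).mono_set Set.Ioo_subset_Icc_self).congr_fun
    (fun y hy => ?_) measurableSet_Ioo
  have : (1 - y ^ 2) = (1 + y) * (1 - y) := by ring
  simp only [smul_eq_mul, this]
  rw [Real.mul_rpow (by linarith [hy.1]) (by linarith [hy.2])]
  ring

lemma differentiableAt_of_mem_ball {d : ℕ} {h : EuclideanSpace ℝ (Fin d) → ℝ}
    (hh : ContDiffOn ℝ 1 h (Metric.closedBall 0 1)) {x : EuclideanSpace ℝ (Fin d)}
    (hx : x ∈ Metric.ball (0 : EuclideanSpace ℝ (Fin d)) 1) : DifferentiableAt ℝ h x :=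
  (hh.differentiableOn one_ne_zero).differentiableAt
    (Filter.mem_of_superset (Metric.isOpen_ball.mem_nhds hx) Metric.ball_subset_closedBall)

/-- On the open ball `fderiv` agrees with `fderivWithin` on the closed ball, which is continuous up
to the boundary. -/
lemma exists_Dop_bound {d : ℕ} (i j : Fin d) {h : EuclideanSpace ℝ (Fin d) → ℝ}
    (hh : ContDiffOn ℝ 1 h (Metric.closedBall 0 1)) :
    ∃ M : ℝ, ∀ x ∈ Metric.ball (0 : EuclideanSpace ℝ (Fin d)) 1, |Dop i j h x| ≤ M := by
  have hU : UniqueDiffOn ℝ (Metric.closedBall (0 : EuclideanSpace ℝ (Fin d)) 1) :=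
    uniqueDiffOn_convex (convex_closedBall _ _)
      ⟨0, Metric.ball_subset_interior_closedBall (Metric.mem_ball_self one_pos)⟩
  have hc := hh.continuousOn_fderivWithin hU le_rfl
  have hc' : ContinuousOn (fun x : EuclideanSpace ℝ (Fin d) =>
      x i * fderivWithin ℝ h (Metric.closedBall 0 1) x (EuclideanSpace.single j 1)
      - x j * fderivWithin ℝ h (Metric.closedBall 0 1) x (EuclideanSpace.single i 1))
      (Metric.closedBall 0 1) := by fun_prop
  obtain ⟨M, hM⟩ := (isCompact_closedBall _ _).exists_bound_of_continuousOn hc'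
  refine ⟨M, fun x hx => ?_⟩
  have := hM x (Metric.ball_subset_closedBall hx)
  rwa [fderivWithin_of_mem_nhds (Filter.mem_of_superset (Metric.isOpen_ball.mem_nhds hx)
    Metric.ball_subset_closedBall)] at this

lemma measurable_Dop {d : ℕ} (i j : Fin d) (h : EuclideanSpace ℝ (Fin d) → ℝ) :
    Measurable (Dop i j h) := by
  have hi : Measurable (pd i h) := measurable_fderiv_apply_const ℝ h _
  have hj : Measurable (pd j h) := measurable_fderiv_apply_const ℝ h _
  unfold Dop
  fun_prop

/-- Rotation by the angle `t` in the oriented `(i,j)`-coordinate plane (for `i ≠ j`), written as a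
perturbation of the identity along the basis vectors `e_i` and `e_j`. -/
noncomputable def rotMap {d : ℕ} (i j : Fin d) (t : ℝ) (x : EuclideanSpace ℝ (Fin d)) :
    EuclideanSpace ℝ (Fin d) :=
  x + ((Real.cos t - 1) * x i - Real.sin t * x j) • EuclideanSpace.single i (1 : ℝ)
    + (Real.sin t * x i + (Real.cos t - 1) * x j) • EuclideanSpace.single j (1 : ℝ)

lemma norm_rotMap {d : ℕ} {i j : Fin d} (hij : i ≠ j) (t : ℝ) (x : EuclideanSpace ℝ (Fin d)) :
    ‖rotMap i j t x‖ = ‖x‖ := by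
  rw [← sq_eq_sq₀ (norm_nonneg _) (norm_nonneg _), rotMap, norm_add_sq_real, norm_add_sq_real]
  simp only [inner_add_left, inner_smul_left, inner_smul_right, norm_smul,
    EuclideanSpace.inner_single_right, PiLp.norm_single, mul_pow, norm_one,
    Real.norm_eq_abs, sq_abs, PiLp.single_apply, hij.symm]
  simp
  have := Real.sin_sq_add_cos_sq t
  linear_combination (x i ^ 2 + x j ^ 2) * this

/-- The rotation `rotMap i j t` as a linear isometric equivalence. -/
noncomputable def rot {d : ℕ} {i j : Fin d} (hij : i ≠ j) (t : ℝ) :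
    EuclideanSpace ℝ (Fin d) ≃ₗᵢ[ℝ] EuclideanSpace ℝ (Fin d) :=
  LinearIsometry.toLinearIsometryEquiv
    { toFun := rotMap i j t
      map_add' := fun x y => by simp only [rotMap, PiLp.add_apply]; module
      map_smul' := fun c x => by
        simp only [rotMap, PiLp.smul_apply, smul_eq_mul, RingHom.id_apply]; module
      norm_map' := norm_rotMap hij t } rfl

@[simp] lemma rot_apply {d : ℕ} {i j : Fin d} (hij : i ≠ j) (t : ℝ)
    (x : EuclideanSpace ℝ (Fin d)) : rot hij t x = rotMap i j t x := rfl

/-- The orbits of the rotations are integral curves of the vector field `x ↦ x_i e_j − x_j e_i`. -/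
lemma hasDerivAt_rotMap {d : ℕ} {i j : Fin d} (hij : i ≠ j) (t : ℝ)
    (x : EuclideanSpace ℝ (Fin d)) :
    HasDerivAt (fun s => rotMap i j s x)
      (rotMap i j t x i • EuclideanSpace.single j (1 : ℝ)
        - rotMap i j t x j • EuclideanSpace.single i (1 : ℝ)) t := by
  have hc := (Real.hasDerivAt_cos t).sub_const 1
  have hs := Real.hasDerivAt_sin t
  have h := (((hc.mul_const (x i)).sub (hs.mul_const (x j))).smul_const
      (EuclideanSpace.single i (1 : ℝ))).const_add x |>.add
    (((hs.mul_const (x i)).add (hc.mul_const (x j))).smul_const (EuclideanSpace.single j (1 : ℝ)))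
  refine h.congr_deriv ?_
  simp only [rotMap, PiLp.add_apply, PiLp.smul_apply, PiLp.single_apply, hij, hij.symm, if_true,
    if_false, smul_eq_mul]
  module

lemma hasDerivAt_comp_rotMap {d : ℕ} {i j : Fin d} (hij : i ≠ j)
    {h : EuclideanSpace ℝ (Fin d) → ℝ} (hh : ContDiffOn ℝ 1 h (Metric.closedBall 0 1)) (t : ℝ)
    {x : EuclideanSpace ℝ (Fin d)} (hx : x ∈ Metric.ball (0 : EuclideanSpace ℝ (Fin d)) 1) :
    HasDerivAt (fun s => h (rotMap i j s x)) (Dop i j h (rotMap i j t x)) t := by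
  have hx' : rotMap i j t x ∈ Metric.ball (0 : EuclideanSpace ℝ (Fin d)) 1 := by
    simpa [norm_rotMap hij] using hx
  have := (differentiableAt_of_mem_ball hh hx').hasFDerivAt.comp_hasDerivAt t
    (hasDerivAt_rotMap hij t x)
  refine this.congr_deriv ?_
  simp [Dop, pd]

/-- Rotation invariance of the weighted integral over the ball. -/
lemma integral_comp_rotMap {d : ℕ} {i j : Fin d} (hij : i ≠ j) (α t : ℝ)
    (h : EuclideanSpace ℝ (Fin d) → ℝ) :
    ∫ x in Metric.ball (0 : EuclideanSpace ℝ (Fin d)) 1, h (rotMap i j t x) * (1 - ‖x‖ ^ 2) ^ α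
      = ∫ x in Metric.ball (0 : EuclideanSpace ℝ (Fin d)) 1, h x * (1 - ‖x‖ ^ 2) ^ α := by
  have := (rot hij t).measurePreserving.setIntegral_preimage_emb
    (rot hij t).toHomeomorph.measurableEmbedding
    (fun x => h x * (1 - ‖x‖ ^ 2) ^ α) (Metric.ball 0 1)
  rw [← this]
  simp [norm_rotMap hij]

lemma integrableOn_continuousOn_mul_weight {d : ℕ} (hd : 1 ≤ d) {α : ℝ} (hα : -1 < α)
    {h : EuclideanSpace ℝ (Fin d) → ℝ} (hh : ContinuousOn h (Metric.closedBall 0 1)) :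
    IntegrableOn (fun x => h x * (1 - ‖x‖ ^ 2) ^ α) (Metric.ball 0 1) := by
  obtain ⟨M, hM⟩ := (isCompact_closedBall _ _).exists_bound_of_continuousOn hh
  exact (weight_integrableOn hd α hα).bdd_mul
    ((hh.mono Metric.ball_subset_closedBall).aestronglyMeasurable measurableSet_ball)
    (ae_restrict_of_forall_mem measurableSet_ball
      fun x hx => hM x (Metric.ball_subset_closedBall hx))

/-- The case of skew-adjointness against the constant function `1`: derivative at `t = 0` of the
constant function `t ↦ ∫ h (R_t x) W_α(x) dx`. -/
lemma integral_Dop_eq_zero {d : ℕ} (hd : 1 ≤ d) {α : ℝ} (hα : -1 < α) {i j : Fin d} (hij : i ≠ j)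
    {h : EuclideanSpace ℝ (Fin d) → ℝ} (hh : ContDiffOn ℝ 1 h (Metric.closedBall 0 1)) :
    ∫ x in Metric.ball (0 : EuclideanSpace ℝ (Fin d)) 1, Dop i j h x * (1 - ‖x‖ ^ 2) ^ α = 0 := by
  obtain ⟨M, hM⟩ := exists_Dop_bound i j hh
  have hw := weight_integrableOn hd α hα
  have hint : ∀ t, IntegrableOn (fun x => h (rotMap i j t x) * (1 - ‖x‖ ^ 2) ^ α)
      (Metric.ball 0 1) := fun t =>
    integrableOn_continuousOn_mul_weight hd hα
      (hh.continuousOn.comp (rot hij t).continuous.continuousOn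
        fun x hx => by simpa [norm_rotMap hij] using hx)
  have hd' := (hasDerivAt_integral_of_dominated_loc_of_deriv_le (x₀ := (0 : ℝ)) (s := Set.univ)
    (μ := volume.restrict (Metric.ball (0 : EuclideanSpace ℝ (Fin d)) 1))
    (F := fun t x => h (rotMap i j t x) * (1 - ‖x‖ ^ 2) ^ α)
    (F' := fun t x => Dop i j h (rotMap i j t x) * (1 - ‖x‖ ^ 2) ^ α)
    (bound := fun x => M * (1 - ‖x‖ ^ 2) ^ α) Filter.univ_mem
    (.of_forall fun t => (hint t).aestronglyMeasurable) (hint 0)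
    (((measurable_Dop i j h).comp (rot hij 0).continuous.measurable).aestronglyMeasurable.mul
      hw.aestronglyMeasurable)
    (ae_restrict_of_forall_mem measurableSet_ball fun x hx t _ => ?_) (hw.const_mul M)
    (ae_restrict_of_forall_mem measurableSet_ball fun x hx t _ =>
      (hasDerivAt_comp_rotMap hij hh t hx).mul_const _)).2
  · simp only [integral_comp_rotMap hij α _ h, integral_comp_rotMap hij α _ (Dop i j h)] at hd'
    exact hd'.unique (hasDerivAt_const _ _)
  · have h1 : ‖x‖ < 1 := by simpa using hx
    have h0 : 0 ≤ 1 - ‖x‖ ^ 2 := by nlinarith [norm_nonneg x]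
    rw [norm_mul, Real.norm_eq_abs, Real.norm_of_nonneg (Real.rpow_nonneg h0 α)]
    gcongr
    exact hM _ (by simpa [norm_rotMap hij] using hx)

lemma integrableOn_Dop_mul {d : ℕ} (hd : 1 ≤ d) {α : ℝ} (hα : -1 < α) (i j : Fin d)
    {f g : EuclideanSpace ℝ (Fin d) → ℝ} (hf : ContDiffOn ℝ 1 f (Metric.closedBall 0 1))
    (hg : ContinuousOn g (Metric.closedBall 0 1)) :
    IntegrableOn (fun x => Dop i j f x * (g x * (1 - ‖x‖ ^ 2) ^ α)) (Metric.ball 0 1) := by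
  obtain ⟨M, hM⟩ := exists_Dop_bound i j hf
  exact (integrableOn_continuousOn_mul_weight hd hα hg).bdd_mul
    (measurable_Dop i j f).aestronglyMeasurable
    (ae_restrict_of_forall_mem measurableSet_ball hM)

/-- `D_{i,j}` is skew-adjoint with respect to `⟨u,v⟩_α = ∫_{B^d} u v (1−‖x‖²)^α dx`. -/
theorem stmt2 {d : ℕ} (hd : 1 ≤ d) (α : ℝ) (hα : -1 < α) (i j : Fin d)
    (f g : EuclideanSpace ℝ (Fin d) → ℝ)
    (hf : ContDiffOn ℝ 1 f (Metric.closedBall 0 1))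
    (hg : ContDiffOn ℝ 1 g (Metric.closedBall 0 1)) :
    ∫ x in Metric.ball (0 : EuclideanSpace ℝ (Fin d)) 1,
        Dop i j f x * g x * (1 - ‖x‖ ^ 2) ^ α
      = - ∫ x in Metric.ball (0 : EuclideanSpace ℝ (Fin d)) 1,
          f x * Dop i j g x * (1 - ‖x‖ ^ 2) ^ α := by
  rcases eq_or_ne i j with rfl | hij
  · simp [Dop]
  have h1 := integrableOn_Dop_mul hd hα i j hf hg.continuousOn
  have h2 := integrableOn_Dop_mul hd hα i j hg hf.continuousOn
  have h0 := integral_Dop_eq_zero hd hα hij (hf.mul hg)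
  rw [eq_neg_iff_add_eq_zero, ← h0, ← integral_add (h1.congr (.of_forall fun x => by ring))
    (h2.congr (.of_forall fun x => by ring))]
  refine setIntegral_congr_fun measurableSet_ball fun x hx => ?_
  have hfx := differentiableAt_of_mem_ball hf hx
  have hgx := differentiableAt_of_mem_ball hg hx
  simp only [Dop, pd]
  rw [show (fun y => f y * g y) = f * g from rfl, fderiv_mul hfx hgx]
  simp
  ring
end

section
/- Let α > −1 and let v_1, ..., v_r be linearly independent polynomials on ℝ^d. If scalars a_1, ..., a_r satisfy Δ((1−‖x‖²)^{1+α} Σ_i a_i v_i(x)) = 0 for all x in the open unit ball, then a_1 = ... = a_r = 0. Consequently, the operator u ↦ Δ((1−‖x‖²)^{1+α} u) is injective on any finite-dimensional space of polynomials. -/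
/-!
The function `f = (1 - ‖x‖²)^(1+α) p`, with `p = ∑ aₘ vₘ`, is smooth on the open unit ball, continuous
on the closed ball, and vanishes on the unit sphere because `1 + α > 0`. Being harmonic, it vanishes
by the weak maximum principle (`nonpos_of_sum_pd_pd_nonneg`, applied to `f` and `-f`). The weight is
positive on the open ball, so `p` vanishes there; hence `p = 0` as a polynomial
(`mvPolynomial_eq_zero_of_ball`), and linear independence gives `aₘ = 0`.

The maximum principle is proved by perturbation: if `f + ε ‖·‖²` had a maximum over the closed ball
at an interior point, then in some coordinate direction its second derivative there would be at
least `2ε > 0`, which is impossible at a maximum. So the maximum lies on the sphere, and `f ≤ ε` on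
the ball for all `ε > 0`.
-/

open MeasureTheory

theorem not_isLocalMax_of_deriv_deriv_pos {h : ℝ → ℝ} {t : ℝ} (hc : ContinuousAt h t)
    (hpos : 0 < deriv (deriv h) t) : ¬ IsLocalMax h t := by
  intro hmax
  have hmin := isLocalMin_of_deriv_deriv_pos hpos hmax.deriv_eq_zero hc
  -- A point that is both a local minimum and a local maximum has `h` constant around it.
  have hconst : h =ᶠ[nhds t] fun _ => h t := by
    filter_upwards [hmax, hmin] with s hs hs'
    exact le_antisymm hs hs'
  rw [hconst.deriv.deriv_eq] at hpos
  simp at hpos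

/-- The weak maximum principle for subharmonic functions on the unit ball with zero boundary values. -/
theorem nonpos_of_sum_pd_pd_nonneg {d : ℕ} (hd : 1 ≤ d) {f : EuclideanSpace ℝ (Fin d) → ℝ}
    (hf : ContDiffOn ℝ 2 f (Metric.ball 0 1)) (hc : ContinuousOn f (Metric.closedBall 0 1))
    (hs : ∀ x, ‖x‖ = 1 → f x = 0)
    (hΔ : ∀ x ∈ Metric.ball (0 : EuclideanSpace ℝ (Fin d)) 1,
      0 ≤ ∑ i : Fin d, pd i (fun y => pd i f y) x) :
    ∀ x ∈ Metric.ball (0 : EuclideanSpace ℝ (Fin d)) 1, f x ≤ 0 := by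
  intro z hz
  refine le_of_forall_pos_le_add fun ε hε => ?_
  obtain ⟨x, hx, hmax⟩ := (isCompact_closedBall (0 : EuclideanSpace ℝ (Fin d)) 1).exists_isMaxOn
    ⟨0, by simp⟩ (f := fun y => f y + ε * ‖y‖ ^ 2) (by fun_prop)
  have hzx : f z + ε * ‖z‖ ^ 2 ≤ f x + ε * ‖x‖ ^ 2 := hmax (Metric.ball_subset_closedBall hz)
  have hx1 : ‖x‖ ≤ 1 := by simpa using hx
  rcases hx1.eq_or_lt with hx1 | hx1
  · rw [hs x hx1, hx1] at hzx
    nlinarith [sq_nonneg ‖z‖]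
  exfalso
  have hxb : x ∈ Metric.ball (0 : EuclideanSpace ℝ (Fin d)) 1 := by simpa using hx1
  obtain ⟨i, hi⟩ : ∃ i : Fin d, 0 ≤ pd i (fun y => pd i f y) x := by
    by_contra! hneg
    have : Nonempty (Fin d) := ⟨⟨0, hd⟩⟩
    exact absurd (hΔ x hxb)
      (not_le.2 (Finset.sum_neg (fun i _ => hneg i) Finset.univ_nonempty))
  set e : EuclideanSpace ℝ (Fin d) := EuclideanSpace.single i 1 with he
  -- Restrict to the line through `x` in direction `e`, where the second-derivative test applies.
  let c : ℝ → EuclideanSpace ℝ (Fin d) := fun t => x + t • e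
  have hcd : ∀ t, HasDerivAt c e t := fun t => by
    have := ((hasDerivAt_id t).smul_const e).const_add x
    rwa [one_smul] at this
  have hc0 : c 0 = x := by simp [c]
  have hnhds : ∀ᶠ t in nhds (0 : ℝ), c t ∈ Metric.ball (0 : EuclideanSpace ℝ (Fin d)) 1 :=
    (hcd 0).continuousAt.eventually_mem (Metric.isOpen_ball.mem_nhds (by rwa [hc0]))
  have hdiff : ∀ y ∈ Metric.ball (0 : EuclideanSpace ℝ (Fin d)) 1, DifferentiableAt ℝ f y :=
    fun y hy => (hf.contDiffAt (Metric.isOpen_ball.mem_nhds hy)).differentiableAt (by norm_num)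
  have hnorm : ∀ t, ‖c t‖ ^ 2 = ‖x‖ ^ 2 + 2 * t * inner ℝ x e + t ^ 2 := fun t => by
    have : ‖e‖ = 1 := by simp [he]
    simp only [c]
    rw [norm_add_sq_real, inner_smul_right, norm_smul, this, mul_one, Real.norm_eq_abs, sq_abs]
    ring
  let h : ℝ → ℝ := fun t => f (c t) + ε * ‖c t‖ ^ 2
  have hh1 : ∀ t, c t ∈ Metric.ball (0 : EuclideanSpace ℝ (Fin d)) 1 →
      HasDerivAt h (pd i f (c t) + ε * (2 * inner ℝ x e + 2 * t)) t := fun t ht => by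
    have h1 : HasDerivAt (fun t => f (c t)) (pd i f (c t)) t :=
      (hdiff _ ht).hasFDerivAt.comp_hasDerivAt t (hcd t)
    have h2 : HasDerivAt (fun t => ‖c t‖ ^ 2) (2 * inner ℝ x e + 2 * t) t := by
      simp only [hnorm]
      have := ((((hasDerivAt_id t).const_mul 2).mul_const (inner ℝ x e)).const_add
        (‖x‖ ^ 2)).add (hasDerivAt_pow 2 t)
      refine this.congr_deriv ?_
      simp
    exact h1.add (h2.const_mul ε)
  have hderiv : deriv h =ᶠ[nhds 0]
      fun t => pd i f (c t) + ε * (2 * inner ℝ x e + 2 * t) := by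
    filter_upwards [hnhds] with t ht using (hh1 t ht).deriv
  have hpdd : DifferentiableAt ℝ (fun y => pd i f y) (c 0) := by
    rw [hc0]
    have := (hf.contDiffAt (Metric.isOpen_ball.mem_nhds hxb)).fderiv_right (m := 1) (by norm_num)
    exact (this.differentiableAt (by norm_num)).clm_apply (differentiableAt_const _)
  have hdd : HasDerivAt (fun t => pd i f (c t) + ε * (2 * inner ℝ x e + 2 * t))
      (pd i (fun y => pd i f y) x + ε * 2) 0 := by
    have h1 : HasDerivAt (fun t => pd i f (c t)) (pd i (fun y => pd i f y) (c 0)) 0 :=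
      hpdd.hasFDerivAt.comp_hasDerivAt 0 (hcd 0)
    rw [hc0] at h1
    have h2 := (((hasDerivAt_id (0 : ℝ)).const_mul 2).const_add (2 * inner ℝ x e)).const_mul ε
    refine (h1.add h2).congr_deriv ?_
    simp
  refine not_isLocalMax_of_deriv_deriv_pos (h := h) (t := 0)
    (hh1 0 (by rwa [hc0])).continuousAt ?_ ?_
  · rw [hderiv.deriv_eq, hdd.deriv]
    positivity
  · filter_upwards [hnhds] with t ht
    have := hmax (Metric.ball_subset_closedBall ht)
    simpa only [h, hc0, Set.mem_ofPred_eq] using this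

theorem mvPolynomial_eq_zero_of_ball {d : ℕ} (p : MvPolynomial (Fin d) ℝ)
    (hp : ∀ x ∈ Metric.ball (0 : EuclideanSpace ℝ (Fin d)) 1,
      MvPolynomial.eval (fun t => x t) p = 0) : p = 0 := by
  -- Pulled back to `Fin d → ℝ`, the Euclidean ball contains a sup-norm ball, which is a box.
  have hev : ∀ᶠ y in nhds (0 : Fin d → ℝ), WithLp.toLp 2 y ∈
      Metric.ball (0 : EuclideanSpace ℝ (Fin d)) 1 :=
    (PiLp.continuous_toLp 2 _).continuousAt.eventually_mem
      (Metric.isOpen_ball.mem_nhds (by simp))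
  obtain ⟨δ, hδ, hsub⟩ := Metric.eventually_nhds_iff_ball.1 hev
  refine MvPolynomial.funext_set (fun _ : Fin d => Metric.ball (0 : ℝ) δ)
    (fun _ => infinite_of_mem_nhds 0 (Metric.ball_mem_nhds _ hδ)) fun y hy => ?_
  have hyb : y ∈ Metric.ball (0 : Fin d → ℝ) δ := by
    rw [ball_pi _ hδ]
    exact hy
  simpa using hp _ (hsub y hyb)

/-- If `v_1, …, v_r` are linearly independent polynomials and
`Δ((1−‖x‖²)^{1+α} Σ_i a_i v_i(x)) = 0` on the open unit ball, then all `a_i` vanish. -/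
theorem stmt10 {d : ℕ} (hd : 1 ≤ d) (α : ℝ) (hα : -1 < α) (r : ℕ)
    (v : Fin r → MvPolynomial (Fin d) ℝ) (hv : LinearIndependent ℝ v)
    (a : Fin r → ℝ)
    (hharm : ∀ x ∈ Metric.ball (0 : EuclideanSpace ℝ (Fin d)) 1,
      (∑ i : Fin d, pd i (fun y => pd i (fun z =>
        (1 - ‖z‖ ^ 2) ^ (1 + α) *
          ∑ m : Fin r, a m * MvPolynomial.eval (fun t => z t) (v m)) y) x) = 0) :
    ∀ m : Fin r, a m = 0 := by
  set f : EuclideanSpace ℝ (Fin d) → ℝ := fun z => (1 - ‖z‖ ^ 2) ^ (1 + α) *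
          ∑ m : Fin r, a m * MvPolynomial.eval (fun t => z t) (v m) with hfdef
  have hpoly : ∀ q : MvPolynomial (Fin d) ℝ, ContDiff ℝ 2
      (fun z : EuclideanSpace ℝ (Fin d) => MvPolynomial.eval (fun t => z t) q) := fun q => by
    simp only [MvPolynomial.eval_eq]
    fun_prop
  have hsum : ContDiff ℝ 2 (fun z : EuclideanSpace ℝ (Fin d) =>
      ∑ m : Fin r, a m * MvPolynomial.eval (fun t => z t) (v m)) :=
    ContDiff.sum fun m _ => contDiff_const.mul (hpoly (v m))
  have hweight : ∀ x ∈ Metric.ball (0 : EuclideanSpace ℝ (Fin d)) 1, 0 < 1 - ‖x‖ ^ 2 := by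
    intro x hx
    have hx1 : ‖x‖ < 1 := by simpa using hx
    nlinarith [norm_nonneg x]
  have hbase : ContDiff ℝ 2 (fun z : EuclideanSpace ℝ (Fin d) => 1 - ‖z‖ ^ 2) :=
    contDiff_const.sub (contDiff_norm_sq ℝ)
  have hf : ContDiffOn ℝ 2 f (Metric.ball 0 1) :=
    (hbase.contDiffOn.rpow_const_of_ne fun x hx => (hweight x hx).ne').mul hsum.contDiffOn
  have hc : Continuous f :=
    (hbase.continuous.rpow_const fun _ => Or.inr (by linarith)).mul hsum.continuous
  have hs : ∀ x, ‖x‖ = 1 → f x = 0 := fun x hx => by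
    simp [hfdef, hx, Real.zero_rpow (show 1 + α ≠ 0 by linarith)]
  have hle := nonpos_of_sum_pd_pd_nonneg hd hf hc.continuousOn hs fun x hx => (hharm x hx).ge
  have hge := nonpos_of_sum_pd_pd_nonneg hd hf.neg hc.neg.continuousOn
    (fun x hx => by simp [hs x hx]) fun x hx => by
      have hneg : ∀ (i : Fin d) (g : EuclideanSpace ℝ (Fin d) → ℝ),
          pd i (-g) = -pd i g := fun i g => by
        ext y
        simp [pd, fderiv_neg]
      have h2 : ∀ i : Fin d, pd i (fun y => pd i (-f) y) x = -pd i (fun y => pd i f y) x :=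
        fun i => by
          change pd i (pd i (-f)) x = -pd i (pd i f) x
          rw [hneg, hneg, Pi.neg_apply]
      change 0 ≤ ∑ i : Fin d, pd i (fun y => pd i (-f) y) x
      rw [Finset.sum_congr rfl fun i _ => h2 i, Finset.sum_neg_distrib, hharm x hx, neg_zero]
  have hp : ∑ m, a m • v m = 0 := by
    refine mvPolynomial_eq_zero_of_ball _ fun x hx => ?_
    have hfx : f x = 0 := le_antisymm (hle x hx) (by simpa using hge x hx)
    have := (mul_eq_zero.1 hfx).resolve_left (Real.rpow_pos_of_pos (hweight x hx) _).ne'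
    simpa [map_sum, MvPolynomial.smul_eval] using this
  exact Fintype.linearIndependent_iff.1 hv a hp
end

section
/- Let α > −1, n ≥ 0, and let p be a polynomial of degree at most n on ℝ^d that is orthogonal to all polynomials of degree at most n−1 in L²(B^d, (1−‖x‖²)^{α+1} dx). Then for every polynomial q of degree at most n−1, ∫_{B^d} (1−‖x‖²)^{1−α} Δ((1−‖x‖²)^{1+α} p(x)) · q(x) · (1−‖x‖²)^α dx = 0; that is, M^α(p) is orthogonal to Π^d_{n−1} in L²(B^d, (1−‖x‖²)^α dx). -/
/-!
Write `ρ = 1 - ‖x‖²`, `u = ρ ^ (1 + α) * p` and `v = ρ * q`. The integrand of the conclusion is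
`v Δu`, and Green's identity gives `v Δu = u Δv + div (v ∇u - u ∇v)`. The polynomial `Δ(ρ q)` has
degree at most `deg q`, so the integral of `u Δv = p * Δ(ρ q) * ρ ^ (α + 1)` vanishes by the
orthogonality of `p`. It remains to see that the divergence term integrates to zero.

Each component of `v ∇u - u ∇v` has the form `ρ ^ (1 + α) * G` with `G` a polynomial, since
`∂ᵢ (ρ ^ s * g) = ρ ^ (s - 1) * (ρ ∂ᵢg - 2 s xᵢ g)`; the bracket is the polynomial `twist s i g`.
Hence Green's identity, divided by `ρ ^ α`, is an identity of polynomials (`green`), and what is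
needed is that the integral over the ball of `∂ᵢ (ρ ^ (1 + α) * G) = ρ ^ α * twist (1 + α) i G` is
zero (`integral_twist`).

As `1 + α` may be less than `1`, the extension of `ρ ^ (1 + α)` by zero need not be differentiable
on the unit sphere, and integration by parts on the whole space does not apply to it directly. It
is applied to the `C¹` approximations `psi α ε ρ` (`integral_psi`). The derivative of `psi α ε` at
`t > 0` is bounded by a constant multiple of `t ^ α`, uniformly in `ε`, and `ρ ^ α` is integrable
on the ball because `α > -1`, so dominated convergence gives the claim as `ε → 0`.
-/

open MeasureTheory

/-- `M^α(u)(x) = (1−‖x‖²)^{1−α} Δ((1−‖x‖²)^{1+α} u(x))`. -/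
noncomputable def Mop {d : ℕ} (α : ℝ) (u : EuclideanSpace ℝ (Fin d) → ℝ)
    (x : EuclideanSpace ℝ (Fin d)) : ℝ :=
  (1 - ‖x‖ ^ 2) ^ (1 - α) *
    ∑ i : Fin d, pd i (fun y => pd i (fun z => (1 - ‖z‖ ^ 2) ^ (1 + α) * u z) y) x

section Aux

open MvPolynomial Filter Topology Set

/-- Evaluation of a polynomial in `d` variables at a point of Euclidean space. -/
noncomputable def ev {d : ℕ} (p : MvPolynomial (Fin d) ℝ) (x : EuclideanSpace ℝ (Fin d)) : ℝ :=
  MvPolynomial.eval (fun t => x t) p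

/-- The polynomial `1 - ∑ Xⱼ²`, which represents `1 - ‖x‖²`. -/
noncomputable def rhoPoly (d : ℕ) : MvPolynomial (Fin d) ℝ := 1 - ∑ j, X j ^ 2

/-- The polynomial `L` such that `∂ᵢ (ρ ^ s * g) = ρ ^ (s - 1) * L`, where `ρ = 1 - ‖x‖²`. -/
noncomputable def twist {d : ℕ} (s : ℝ) (i : Fin d) (g : MvPolynomial (Fin d) ℝ) :
    MvPolynomial (Fin d) ℝ :=
  rhoPoly d * pderiv i g - C (2 * s) * X i * g

lemma ev_rhoPoly {d : ℕ} (x : EuclideanSpace ℝ (Fin d)) : ev (rhoPoly d) x = 1 - ‖x‖ ^ 2 := by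
  simp [ev, rhoPoly, EuclideanSpace.norm_sq_eq]

lemma pderiv_rhoPoly {d : ℕ} (i : Fin d) : pderiv i (rhoPoly d) = -2 * X i := by
  classical
  simp [rhoPoly, Pi.single_apply]

lemma continuous_ev {d : ℕ} (p : MvPolynomial (Fin d) ℝ) : Continuous (ev p) := by
  unfold ev
  exact (MvPolynomial.continuous_eval p).comp (by fun_prop)

/-! ### Derivatives of polynomials and of `ρ ^ s * g` -/

lemma hasFDerivAt_ev {d : ℕ} (p : MvPolynomial (Fin d) ℝ) (x : EuclideanSpace ℝ (Fin d)) :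
    HasFDerivAt (ev p)
      (∑ i, ev (pderiv i p) x • (EuclideanSpace.proj i : EuclideanSpace ℝ (Fin d) →L[ℝ] ℝ)) x := by
  classical
  induction p using MvPolynomial.induction_on with
  | C a =>
    have e : ev (C a : MvPolynomial (Fin d) ℝ) = fun _ => a := by ext y; simp [ev]
    rw [e]
    simpa [ev] using hasFDerivAt_const (𝕜 := ℝ) a x
  | add p q hp hq =>
    have e : ev (p + q) = ev p + ev q := by ext y; simp [ev]
    rw [e]
    refine (hp.add hq).congr_fderiv ?_
    simp [ev, add_smul, Finset.sum_add_distrib]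
  | mul_X p j hp =>
    have hj : HasFDerivAt (fun y : EuclideanSpace ℝ (Fin d) => y j)
        (EuclideanSpace.proj j : EuclideanSpace ℝ (Fin d) →L[ℝ] ℝ) x :=
      (EuclideanSpace.proj j : EuclideanSpace ℝ (Fin d) →L[ℝ] ℝ).hasFDerivAt
    have e : ev (p * X j) = ev p * fun y => y j := by ext y; simp [ev]
    rw [e]
    refine (hp.mul hj).congr_fderiv ?_
    ext v
    simp only [ev, pderiv_mul, pderiv_X, Pi.single_apply, map_add, map_mul, eval_X, add_smul,
      Finset.sum_add_distrib, _root_.add_apply, _root_.sum_apply,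
      _root_.smul_apply, PiLp.proj_apply, smul_eq_mul, Finset.mul_sum]
    rw [add_comm]
    congr 1
    · exact Finset.sum_congr rfl fun i _ => by ring
    · rw [Finset.sum_eq_single j] <;> simp +contextual [eq_comm]

lemma hasLineDerivAt_ev {d : ℕ} (p : MvPolynomial (Fin d) ℝ) (x : EuclideanSpace ℝ (Fin d))
    (i : Fin d) : HasLineDerivAt ℝ (ev p) (ev (pderiv i p) x) x (EuclideanSpace.single i 1) := by
  have := (hasFDerivAt_ev p x).hasLineDerivAt (EuclideanSpace.single i 1)
  simpa [Pi.single_apply] using this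

lemma pd_rpow_mul_ev {d : ℕ} (s : ℝ) (i : Fin d) (g : MvPolynomial (Fin d) ℝ)
    {x : EuclideanSpace ℝ (Fin d)} (hx : ‖x‖ < 1) :
    pd i (fun z => (1 - ‖z‖ ^ 2) ^ s * ev g z) x = (1 - ‖x‖ ^ 2) ^ (s - 1) * ev (twist s i g) x := by
  have hpos : 0 < 1 - ‖x‖ ^ 2 := by nlinarith [norm_nonneg x]
  have h1 := hasFDerivAt_ev (rhoPoly d) x
  have h2 := (h1.rpow_const (p := s) (Or.inl (by rw [ev_rhoPoly]; exact hpos.ne'))).mul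
    (hasFDerivAt_ev g x)
  have h3 : (fun z => (1 - ‖z‖ ^ 2) ^ s * ev g z) = (fun z => ev (rhoPoly d) z ^ s) * ev g := by
    ext z; simp [ev_rhoPoly]
  rw [pd, h3, h2.fderiv]
  simp only [ev_rhoPoly, pderiv_rhoPoly]
  have h4 : (1 - ‖x‖ ^ 2) ^ s = (1 - ‖x‖ ^ 2) ^ (s - 1) * (1 - ‖x‖ ^ 2) := by
    rw [Real.rpow_sub_one hpos.ne']; field_simp
  have h5 : ev (twist s i g) x = (1 - ‖x‖ ^ 2) * ev (pderiv i g) x - 2 * s * x i * ev g x := by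
    rw [← ev_rhoPoly]; simp [ev, twist]
  rw [h5]
  simp [h4]
  simp [ev]
  ring

/-- Inside the ball, `Mop α p` is a polynomial: the two derivatives lower the exponent of `ρ` from
`1 + α` to `α - 1`, which the prefactor `ρ ^ (1 - α)` cancels. -/
lemma Mop_eq {d : ℕ} (α : ℝ) (p : MvPolynomial (Fin d) ℝ) {x : EuclideanSpace ℝ (Fin d)}
    (hx : ‖x‖ < 1) :
    Mop α (ev p) x = ev (∑ i, twist α i (twist (1 + α) i p)) x := by
  have hpos : 0 < 1 - ‖x‖ ^ 2 := by nlinarith [norm_nonneg x]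
  have key : ∀ i : Fin d,
      pd i (fun y => pd i (fun z => (1 - ‖z‖ ^ 2) ^ (1 + α) * ev p z) y) x =
        (1 - ‖x‖ ^ 2) ^ (α - 1) * ev (twist α i (twist (1 + α) i p)) x := by
    intro i
    rw [← pd_rpow_mul_ev _ _ _ hx]
    unfold pd
    have : (fun y => fderiv ℝ (fun z => (1 - ‖z‖ ^ 2) ^ (1 + α) * ev p z) y
        (EuclideanSpace.single i 1)) =ᶠ[𝓝 x]
        fun y => (1 - ‖y‖ ^ 2) ^ α * ev (twist (1 + α) i p) y := by
      filter_upwards [(isOpen_lt continuous_norm continuous_const).mem_nhds hx] with y hy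
      have := pd_rpow_mul_ev (1 + α) i p hy
      rw [pd] at this
      rw [this]
      congr 2; ring
    rw [this.fderiv_eq]
  unfold Mop
  simp only [key]
  rw [← Finset.mul_sum, ← mul_assoc, ← Real.rpow_add hpos]
  simp [ev]

lemma pderiv_totalDegree_le {d : ℕ} (i : Fin d) (p : MvPolynomial (Fin d) ℝ) :
    (pderiv i p).totalDegree ≤ p.totalDegree - 1 := by
  refine Finset.sup_le fun m hm => ?_
  have hm' : m + Finsupp.single i 1 ∈ p.support := by
    rw [mem_support_iff, coeff_pderiv] at hm
    exact mem_support_iff.2 (left_ne_zero_of_mul hm)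
  have h := le_totalDegree hm'
  rw [Finsupp.sum_add_index' (fun _ => rfl) (fun _ _ _ => rfl), Finsupp.sum_single_index rfl] at h
  exact Nat.le_sub_of_add_le h

/-! ### Integrability of the weight -/

lemma integrableOn_rho_rpow {d : ℕ} (hd : 1 ≤ d) {α : ℝ} (hα : -1 < α) :
    IntegrableOn (fun x : EuclideanSpace ℝ (Fin d) => (1 - ‖x‖ ^ 2) ^ α) (Metric.ball 0 1) := by
  have : Nontrivial (EuclideanSpace ℝ (Fin d)) := by
    have : Nonempty (Fin d) := ⟨⟨0, hd⟩⟩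
    infer_instance
  rw [integrableOn_fun_norm_addHaar volume (f := fun r : ℝ => (1 - r ^ 2) ^ α)]
  have h1 : IntegrableOn (fun r : ℝ => (1 - r) ^ α) (Icc 0 1) := by
    have h := (intervalIntegral.intervalIntegrable_rpow' (a := 0) (b := 1) hα).comp_sub_left 1
    simp only [sub_zero, sub_self] at h
    have := h.symm
    rwa [intervalIntegrable_iff_integrableOn_Icc_of_le zero_le_one] at this
  have h2 : ContinuousOn (fun r : ℝ => r ^ (Module.finrank ℝ (EuclideanSpace ℝ (Fin d)) - 1) *
      (1 + r) ^ α) (Icc 0 1) := by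
    refine ContinuousOn.mul (by fun_prop) (ContinuousOn.rpow_const (by fun_prop) ?_)
    intro r hr
    left; linarith [hr.1]
  have h3 := (h1.continuousOn_mul h2 isCompact_Icc).mono_set Ioo_subset_Icc_self
  refine h3.congr_fun ?_ measurableSet_Ioo
  intro r hr
  have e : 1 - r ^ 2 = (1 + r) * (1 - r) := by ring
  simp only [smul_eq_mul, e]
  rw [Real.mul_rpow (by linarith [hr.1]) (by linarith [hr.2])]
  ring

lemma exists_bound_ev {d : ℕ} (G : MvPolynomial (Fin d) ℝ) :
    ∃ K, ∀ x ∈ Metric.ball (0 : EuclideanSpace ℝ (Fin d)) 1, ‖ev G x‖ ≤ K := by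
  obtain ⟨K, hK⟩ := (isCompact_closedBall (0 : EuclideanSpace ℝ (Fin d)) 1).exists_bound_of_continuousOn
    (continuous_ev G).continuousOn
  exact ⟨K, fun x hx => hK x (Metric.ball_subset_closedBall hx)⟩

lemma integrableOn_ev_mul_rpow {d : ℕ} (hd : 1 ≤ d) {α : ℝ} (hα : -1 < α)
    (G : MvPolynomial (Fin d) ℝ) :
    IntegrableOn (fun x => ev G x * (1 - ‖x‖ ^ 2) ^ α) (Metric.ball 0 1) := by
  obtain ⟨K, hK⟩ := exists_bound_ev G
  exact (integrableOn_rho_rpow hd hα).bdd_mul (continuous_ev G).aestronglyMeasurable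
    ((ae_restrict_iff' measurableSet_ball).2 (.of_forall hK))

/-! ### The divergence theorem on the ball -/

lemma hasDerivAt_max_rpow {s : ℝ} (hs : 1 < s) (t : ℝ) :
    HasDerivAt (fun t : ℝ => max t 0 ^ s) (s * max t 0 ^ (s - 1)) t := by
  rcases lt_trichotomy t 0 with h | rfl | h
  · have : (fun t : ℝ => max t 0 ^ s) =ᶠ[𝓝 t] fun _ => 0 := by
      filter_upwards [Iio_mem_nhds h] with u hu
      rw [max_eq_right (le_of_lt hu), Real.zero_rpow (by linarith)]
    rw [max_eq_right h.le, Real.zero_rpow (by linarith), mul_zero]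
    exact (hasDerivAt_const t (0 : ℝ)).congr_of_eventuallyEq this
  · have h1 : HasDerivWithinAt (fun t : ℝ => max t 0 ^ s) (s * max 0 0 ^ (s - 1)) (Iic 0) 0 := by
      rw [max_self, Real.zero_rpow (by linarith), mul_zero]
      refine (hasDerivWithinAt_const (0 : ℝ) _ (0 : ℝ)).congr ?_ ?_
      · intro u hu
        rw [max_eq_right hu, Real.zero_rpow (by linarith)]
      · rw [max_self, Real.zero_rpow (by linarith)]
    have h2 : HasDerivWithinAt (fun t : ℝ => max t 0 ^ s) (s * max 0 0 ^ (s - 1)) (Ici 0) 0 := by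
      rw [max_self]
      refine (Real.hasDerivAt_rpow_const (Or.inr hs.le)).hasDerivWithinAt.congr ?_ ?_
      · intro u hu
        rw [max_eq_left hu]
      · rw [max_self]
    have := h1.union h2
    rwa [Iic_union_Ici, hasDerivWithinAt_univ] at this
  · have : (fun t : ℝ => max t 0 ^ s) =ᶠ[𝓝 t] fun u => u ^ s := by
      filter_upwards [Ioi_mem_nhds h] with u hu
      rw [max_eq_left (le_of_lt hu)]
    rw [max_eq_left h.le]
    exact (Real.hasDerivAt_rpow_const (Or.inl h.ne')).congr_of_eventuallyEq this

/-- A `C¹` approximation, as `ε → 0⁺`, of the function `t ↦ t₊ ^ (1 + α)`, namely its product with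
`t² / (t² + ε)`. The factor `t²` makes it differentiable at `0` for every `α > -1`. -/
noncomputable def psi (α ε t : ℝ) : ℝ := max t 0 ^ (3 + α) / (t ^ 2 + ε)

/-- The derivative of `psi α ε`. -/
noncomputable def psi' (α ε t : ℝ) : ℝ :=
  ((3 + α) * max t 0 ^ (2 + α) * (t ^ 2 + ε) - max t 0 ^ (3 + α) * (2 * t)) / (t ^ 2 + ε) ^ 2

lemma hasDerivAt_psi {α ε : ℝ} (hα : -1 < α) (hε : 0 < ε) (t : ℝ) :
    HasDerivAt (psi α ε) (psi' α ε t) t := by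
  have h1 := hasDerivAt_max_rpow (s := 3 + α) (by linarith) t
  have h2 : HasDerivAt (fun t : ℝ => t ^ 2 + ε) (2 * t) t := by
    simpa using (hasDerivAt_pow 2 t).add_const ε
  have := h1.div h2 (by positivity)
  rw [show 3 + α - 1 = 2 + α by ring] at this
  exact this

lemma continuous_psi {α ε : ℝ} (hα : -1 < α) (hε : 0 < ε) : Continuous (psi α ε) := by
  unfold psi
  refine Continuous.div ?_ (by fun_prop) (fun t => by positivity)
  exact Continuous.rpow_const (by fun_prop) (fun t => Or.inr (by linarith))

lemma continuous_psi' {α ε : ℝ} (hα : -1 < α) (hε : 0 < ε) : Continuous (psi' α ε) := by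
  unfold psi'
  have h1 : Continuous fun t : ℝ => max t 0 ^ (2 + α) :=
    Continuous.rpow_const (by fun_prop) (fun t => Or.inr (by linarith))
  have h2 : Continuous fun t : ℝ => max t 0 ^ (3 + α) :=
    Continuous.rpow_const (by fun_prop) (fun t => Or.inr (by linarith))
  exact Continuous.div (by fun_prop) (by fun_prop) (fun t => by positivity)

lemma psi_of_nonpos {α ε t : ℝ} (hα : -1 < α) (ht : t ≤ 0) : psi α ε t = 0 := by
  rw [psi, max_eq_right ht, Real.zero_rpow (by linarith), zero_div]

lemma psi'_of_nonpos {α ε t : ℝ} (hα : -1 < α) (ht : t ≤ 0) : psi' α ε t = 0 := by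
  rw [psi', max_eq_right ht, Real.zero_rpow (by linarith), Real.zero_rpow (by linarith)]
  simp

lemma psi_eq {α ε t : ℝ} (ht : 0 < t) : psi α ε t = t ^ α * (t ^ 3 / (t ^ 2 + ε)) := by
  rw [psi, max_eq_left ht.le, add_comm, Real.rpow_add ht, mul_div_assoc]
  norm_cast

lemma psi'_eq {α ε t : ℝ} (ht : 0 < t) :
    psi' α ε t = t ^ α * (((3 + α) * t ^ 2 * (t ^ 2 + ε) - 2 * t ^ 4) / (t ^ 2 + ε) ^ 2) := by
  have h2 : t ^ (2 + α) = t ^ 2 * t ^ α := by rw [Real.rpow_add ht]; norm_cast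
  have h3 : t ^ (3 + α) = t ^ 3 * t ^ α := by rw [Real.rpow_add ht]; norm_cast
  rw [psi', max_eq_left ht.le, h2, h3]
  ring

/-- Together with `abs_psi'_le`, the bound by an integrable weight, uniform in `ε`, used in the
dominated convergence argument. -/
lemma abs_psi_le {α ε t : ℝ} (hε : 0 < ε) (ht : 0 < t) (ht1 : t ≤ 1) :
    |psi α ε t| ≤ t ^ α := by
  have ha : 0 < t ^ α := Real.rpow_pos_of_pos ht _
  rw [psi_eq ht, abs_of_nonneg (by positivity)]
  refine mul_le_of_le_one_right ha.le ?_
  rw [div_le_one (by positivity)]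
  nlinarith [mul_pos ht ht]

lemma abs_psi'_le {α ε t : ℝ} (hα : -1 < α) (hε : 0 < ε) (ht : 0 < t) :
    |psi' α ε t| ≤ t ^ α * (5 + α) := by
  have ha : 0 < t ^ α := Real.rpow_pos_of_pos ht _
  rw [psi'_eq ht, abs_mul, abs_of_pos ha]
  refine mul_le_mul_of_nonneg_left ?_ ha.le
  have h3 : 0 < 3 + α := by linarith
  rw [abs_div, abs_of_pos (a := (t ^ 2 + ε) ^ 2) (by positivity), div_le_iff₀ (by positivity)]
  refine (abs_sub _ _).trans ?_
  rw [abs_of_pos (by positivity), abs_of_pos (by positivity)]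
  have hA : 0 ≤ (3 + α) * (ε * (t ^ 2 + ε)) := by positivity
  have hB : 0 ≤ 2 * t ^ 2 * ε + ε ^ 2 := by positivity
  nlinarith

lemma tendsto_psi {α t : ℝ} (ht : 0 < t) :
    Tendsto (fun ε => psi α ε t) (𝓝[>] 0) (𝓝 (t ^ (α + 1))) := by
  simp only [psi_eq ht]
  have : ContinuousAt (fun ε : ℝ => t ^ α * (t ^ 3 / (t ^ 2 + ε))) 0 := by
    refine ContinuousAt.mul (by fun_prop) (ContinuousAt.div (by fun_prop) (by fun_prop) ?_)
    positivity
  have h := this.tendsto.mono_left (nhdsWithin_le_nhds (s := Ioi 0))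
  convert h using 2
  rw [Real.rpow_add_one ht.ne', add_zero]
  field_simp

lemma tendsto_psi' {α t : ℝ} (ht : 0 < t) :
    Tendsto (fun ε => psi' α ε t) (𝓝[>] 0) (𝓝 ((1 + α) * t ^ α)) := by
  simp only [psi'_eq ht]
  have : ContinuousAt (fun ε : ℝ =>
      t ^ α * (((3 + α) * t ^ 2 * (t ^ 2 + ε) - 2 * t ^ 4) / (t ^ 2 + ε) ^ 2)) 0 := by
    refine ContinuousAt.mul (by fun_prop) (ContinuousAt.div (by fun_prop) (by fun_prop) ?_)
    positivity
  have h := this.tendsto.mono_left (nhdsWithin_le_nhds (s := Ioi 0))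
  convert h using 2
  rw [add_zero]
  field_simp
  ring

/-- Integration by parts on the whole space for `G` and `psi α ε (1 - ‖x‖²)`. Both integrands vanish
outside the ball. -/
lemma integral_psi {d : ℕ} {α ε : ℝ} (hα : -1 < α) (hε : 0 < ε) (i : Fin d)
    (G : MvPolynomial (Fin d) ℝ) :
    ∫ x in Metric.ball (0 : EuclideanSpace ℝ (Fin d)) 1,
      ev G x * (psi' α ε (1 - ‖x‖ ^ 2) * (-2 * x i)) =
    - ∫ x in Metric.ball (0 : EuclideanSpace ℝ (Fin d)) 1,
      ev (pderiv i G) x * psi α ε (1 - ‖x‖ ^ 2) := by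
  have hout : ∀ x : EuclideanSpace ℝ (Fin d), x ∉ Metric.ball 0 1 → 1 - ‖x‖ ^ 2 ≤ 0 := by
    intro x hx
    rw [mem_ball_zero_iff, not_lt] at hx
    nlinarith
  have hc1 := continuous_psi hα hε
  have hc2 := continuous_psi' hα hε
  have hG := continuous_ev G
  have hG' := continuous_ev (pderiv i G)
  have hint : ∀ f : EuclideanSpace ℝ (Fin d) → ℝ, Continuous f →
      (∀ x, x ∉ Metric.ball 0 1 → f x = 0) → Integrable f := by
    intro f hf h0
    refine hf.integrable_of_hasCompactSupport
      (HasCompactSupport.intro (isCompact_closedBall 0 1) fun x hx => h0 x ?_)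
    exact fun h => hx (Metric.ball_subset_closedBall h)
  have z1 : ∀ x : EuclideanSpace ℝ (Fin d), x ∉ Metric.ball 0 1 →
      ev G x * (psi' α ε (1 - ‖x‖ ^ 2) * (-2 * x i)) = 0 := fun x hx => by
    rw [psi'_of_nonpos hα (hout x hx)]; ring
  have z2 : ∀ x : EuclideanSpace ℝ (Fin d), x ∉ Metric.ball 0 1 →
      ev (pderiv i G) x * psi α ε (1 - ‖x‖ ^ 2) = 0 := fun x hx => by
    rw [psi_of_nonpos hα (hout x hx)]; ring
  have z3 : ∀ x : EuclideanSpace ℝ (Fin d), x ∉ Metric.ball 0 1 →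
      ev G x * psi α ε (1 - ‖x‖ ^ 2) = 0 := fun x hx => by
    rw [psi_of_nonpos hα (hout x hx)]; ring
  rw [setIntegral_eq_integral_of_forall_compl_eq_zero z1,
    setIntegral_eq_integral_of_forall_compl_eq_zero z2]
  refine integral_bilinear_hasLineDerivAt_right_eq_neg_left_of_integrable
    (B := ContinuousLinearMap.mul ℝ ℝ) (v := EuclideanSpace.single i 1)
    (f := ev G) (f' := ev (pderiv i G)) (g := fun x => psi α ε (1 - ‖x‖ ^ 2))
    (g' := fun x => psi' α ε (1 - ‖x‖ ^ 2) * (-2 * x i))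
    (hint _ (by simp only [ContinuousLinearMap.mul_apply']; fun_prop) z2)
    (hint _ (by simp only [ContinuousLinearMap.mul_apply']; fun_prop) z1)
    (hint _ (by simp only [ContinuousLinearMap.mul_apply']; fun_prop) z3)
    (fun x _ => hasLineDerivAt_ev G x i) (fun x _ => ?_)
  have h1 := hasLineDerivAt_ev (rhoPoly d) x i
  rw [pderiv_rhoPoly] at h1
  unfold HasLineDerivAt at h1 ⊢
  have h2 := HasDerivAt.comp (0 : ℝ) (hasDerivAt_psi (ε := ε) hα hε _) h1
  simp only [ev_rhoPoly, zero_smul, add_zero] at h2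
  simpa [ev, Function.comp_def, ev_rhoPoly] using h2

/-- The integral over the unit ball of the `i`-th partial derivative of `ρ ^ (1 + α) * G`
vanishes, where `ρ = 1 - ‖x‖²`. -/
lemma integral_twist {d : ℕ} (hd : 1 ≤ d) {α : ℝ} (hα : -1 < α) (i : Fin d)
    (G : MvPolynomial (Fin d) ℝ) :
    ∫ x in Metric.ball (0 : EuclideanSpace ℝ (Fin d)) 1,
      ev (twist (1 + α) i G) x * (1 - ‖x‖ ^ 2) ^ α = 0 := by
  have hb : ∀ x ∈ Metric.ball (0 : EuclideanSpace ℝ (Fin d)) 1,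
      0 < 1 - ‖x‖ ^ 2 ∧ 1 - ‖x‖ ^ 2 ≤ 1 := by
    intro x hx
    rw [mem_ball_zero_iff] at hx
    constructor <;> nlinarith [norm_nonneg x]
  obtain ⟨K, hK⟩ := exists_bound_ev (-2 * X i * G)
  obtain ⟨K', hK'⟩ := exists_bound_ev (pderiv i G)
  have hI := integrableOn_rho_rpow hd hα
  have e1 : ∀ x : EuclideanSpace ℝ (Fin d), ev (-2 * X i * G) x = ev G x * (-2 * x i) := by
    intro x; simp [ev]; ring
  have t1 : Tendsto (fun ε => ∫ x in Metric.ball (0 : EuclideanSpace ℝ (Fin d)) 1,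
      ev G x * (psi' α ε (1 - ‖x‖ ^ 2) * (-2 * x i))) (𝓝[>] 0)
      (𝓝 (∫ x in Metric.ball (0 : EuclideanSpace ℝ (Fin d)) 1,
        ev G x * (((1 + α) * (1 - ‖x‖ ^ 2) ^ α) * (-2 * x i)))) := by
    refine tendsto_integral_filter_of_dominated_convergence
      (fun x => K * (5 + α) * (1 - ‖x‖ ^ 2) ^ α) ?_ ?_ (hI.const_mul _) ?_
    · filter_upwards [self_mem_nhdsWithin] with ε hε
      have hc2 := continuous_psi' hα hε
      have hG := continuous_ev G
      exact Continuous.aestronglyMeasurable (by fun_prop)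
    · filter_upwards [self_mem_nhdsWithin] with ε hε
      refine (ae_restrict_iff' measurableSet_ball).2 (.of_forall fun x hx => ?_)
      have h1 := hK x hx
      have h2 := abs_psi'_le hα hε (hb x hx).1
      rw [e1] at h1
      calc ‖ev G x * (psi' α ε (1 - ‖x‖ ^ 2) * (-2 * x i))‖
          = ‖ev G x * (-2 * x i)‖ * |psi' α ε (1 - ‖x‖ ^ 2)| := by
            rw [← Real.norm_eq_abs, ← norm_mul]; congr 1; ring
        _ ≤ K * ((1 - ‖x‖ ^ 2) ^ α * (5 + α)) :=
            mul_le_mul h1 h2 (abs_nonneg _) ((norm_nonneg _).trans h1)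
        _ = _ := by ring
    · refine (ae_restrict_iff' measurableSet_ball).2 (.of_forall fun x hx => ?_)
      exact ((tendsto_psi' (hb x hx).1).mul_const _).const_mul _
  have t2 : Tendsto (fun ε => ∫ x in Metric.ball (0 : EuclideanSpace ℝ (Fin d)) 1,
      ev (pderiv i G) x * psi α ε (1 - ‖x‖ ^ 2)) (𝓝[>] 0)
      (𝓝 (∫ x in Metric.ball (0 : EuclideanSpace ℝ (Fin d)) 1,
        ev (pderiv i G) x * (1 - ‖x‖ ^ 2) ^ (α + 1))) := by
    refine tendsto_integral_filter_of_dominated_convergence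
      (fun x => K' * (1 - ‖x‖ ^ 2) ^ α) ?_ ?_ (hI.const_mul _) ?_
    · filter_upwards [self_mem_nhdsWithin] with ε hε
      have hc1 := continuous_psi hα hε
      have hG := continuous_ev (pderiv i G)
      exact Continuous.aestronglyMeasurable (by fun_prop)
    · filter_upwards [self_mem_nhdsWithin] with ε hε
      refine (ae_restrict_iff' measurableSet_ball).2 (.of_forall fun x hx => ?_)
      have h1 := hK' x hx
      rw [norm_mul]
      exact mul_le_mul h1 (abs_psi_le hε (hb x hx).1 (hb x hx).2) (abs_nonneg _)
        ((norm_nonneg _).trans h1)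
    · refine (ae_restrict_iff' measurableSet_ball).2 (.of_forall fun x hx => ?_)
      exact (tendsto_psi (hb x hx).1).const_mul _
  have t3 : ∫ x in Metric.ball (0 : EuclideanSpace ℝ (Fin d)) 1,
        ev G x * (((1 + α) * (1 - ‖x‖ ^ 2) ^ α) * (-2 * x i)) =
      - ∫ x in Metric.ball (0 : EuclideanSpace ℝ (Fin d)) 1,
        ev (pderiv i G) x * (1 - ‖x‖ ^ 2) ^ (α + 1) := by
    refine tendsto_nhds_unique t1 (t2.neg.congr' ?_)
    filter_upwards [self_mem_nhdsWithin] with ε hε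
    exact (integral_psi hα hε i G).symm
  have i1 := integrableOn_ev_mul_rpow hd hα (C (1 + α) * (-2 * X i) * G)
  have i2 := integrableOn_ev_mul_rpow hd (α := α + 1) (by linarith) (pderiv i G)
  calc _ = ∫ x in Metric.ball (0 : EuclideanSpace ℝ (Fin d)) 1,
        (ev (pderiv i G) x * (1 - ‖x‖ ^ 2) ^ (α + 1) +
          ev (C (1 + α) * (-2 * X i) * G) x * (1 - ‖x‖ ^ 2) ^ α) := by
        refine setIntegral_congr_fun measurableSet_ball fun x hx => ?_
        have h : ev (twist (1 + α) i G) x =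
            (1 - ‖x‖ ^ 2) * ev (pderiv i G) x + ev (C (1 + α) * (-2 * X i) * G) x := by
          rw [← ev_rhoPoly]; simp [ev, twist]; ring
        simp only [h]
        rw [Real.rpow_add_one (hb x hx).1.ne']
        ring
    _ = 0 := by
        rw [integral_add i2 i1, ← neg_eq_iff_add_eq_zero, ← t3]
        congr 1; ext x
        simp [ev]; ring

/-! ### Green's identity -/

/-- Green's identity `v Δu - u Δv = div (v ∇u - u ∇v)` for `u = ρ ^ (1 + α) * p` and `v = ρ * q`,
divided by `ρ ^ α`, one coordinate at a time. -/
lemma green {d : ℕ} (α : ℝ) (i : Fin d) (p q : MvPolynomial (Fin d) ℝ) :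
    twist α i (twist (1 + α) i p) * q =
      rhoPoly d * p * pderiv i (pderiv i (rhoPoly d * q)) +
        twist (1 + α) i (rhoPoly d * (q * pderiv i p - p * pderiv i q) - C (2 * α) * X i * p * q) := by
  simp only [twist, map_sub, map_add, pderiv_mul, pderiv_rhoPoly, pderiv_C, pderiv_one, map_mul,
    pderiv_X_self, C_1, show (pderiv i) (-2 : MvPolynomial (Fin d) ℝ) = 0 by
      rw [← map_ofNat C 2, ← C_neg, pderiv_C]]
  rw [map_ofNat]
  ring

end Aux

/-- If `p ∈ Π^d_n` is orthogonal to `Π^d_{n−1}` in `L²(B^d, (1−‖x‖²)^{α+1})`,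
then `M^α(p)` is orthogonal to `Π^d_{n−1}` in `L²(B^d, (1−‖x‖²)^α)`. -/
theorem stmt11 {d : ℕ} (hd : 1 ≤ d) (α : ℝ) (hα : -1 < α) (n : ℕ)
    (p : MvPolynomial (Fin d) ℝ) (hdeg : p.totalDegree ≤ n)
    (horth : ∀ q : MvPolynomial (Fin d) ℝ, q.totalDegree < n →
      ∫ x in Metric.ball (0 : EuclideanSpace ℝ (Fin d)) 1,
        MvPolynomial.eval (fun t => x t) p * MvPolynomial.eval (fun t => x t) q *
          (1 - ‖x‖ ^ 2) ^ (α + 1) = 0) :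
    ∀ q : MvPolynomial (Fin d) ℝ, q.totalDegree < n →
      ∫ x in Metric.ball (0 : EuclideanSpace ℝ (Fin d)) 1,
        Mop α (fun y => MvPolynomial.eval (fun t => y t) p) x *
          MvPolynomial.eval (fun t => x t) q * (1 - ‖x‖ ^ 2) ^ α = 0 := by
  intro q hq
  let Q : MvPolynomial (Fin d) ℝ :=
    ∑ i, MvPolynomial.pderiv i (MvPolynomial.pderiv i (rhoPoly d * q))
  let G : Fin d → MvPolynomial (Fin d) ℝ := fun i =>
    rhoPoly d * (q * MvPolynomial.pderiv i p - p * MvPolynomial.pderiv i q) -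
      MvPolynomial.C (2 * α) * MvPolynomial.X i * p * q
  have hR : (rhoPoly d).totalDegree ≤ 2 := by
    refine (MvPolynomial.totalDegree_sub _ _).trans (max_le (by simp) ?_)
    exact MvPolynomial.totalDegree_finsetSum_le fun j _ => by simp
  -- the factor `rhoPoly d` raises the degree by two, and the two derivatives lower it by two
  have hQ : Q.totalDegree < n := by
    refine lt_of_le_of_lt (MvPolynomial.totalDegree_finsetSum_le (d := q.totalDegree) ?_) hq
    intro i _
    have h1 := pderiv_totalDegree_le i (MvPolynomial.pderiv i (rhoPoly d * q))
    have h2 := pderiv_totalDegree_le i (rhoPoly d * q)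
    have h3 := MvPolynomial.totalDegree_mul (rhoPoly d) q
    omega
  have hsum : (∑ i, twist α i (twist (1 + α) i p)) * q =
      rhoPoly d * p * Q + ∑ i, twist (1 + α) i (G i) := by
    rw [Finset.sum_mul, Finset.mul_sum, ← Finset.sum_add_distrib]
    exact Finset.sum_congr rfl fun i _ => green α i p q
  have i1 := integrableOn_ev_mul_rpow hd (α := α + 1) (by linarith) (p * Q)
  have i2 := fun i => integrableOn_ev_mul_rpow hd hα (twist (1 + α) i (G i))
  calc _ = ∫ x in Metric.ball (0 : EuclideanSpace ℝ (Fin d)) 1,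
        (ev (p * Q) x * (1 - ‖x‖ ^ 2) ^ (α + 1) +
          ∑ i, ev (twist (1 + α) i (G i)) x * (1 - ‖x‖ ^ 2) ^ α) := by
        refine setIntegral_congr_fun measurableSet_ball fun x hx => ?_
        rw [mem_ball_zero_iff] at hx
        have hpos : 0 < 1 - ‖x‖ ^ 2 := by nlinarith [norm_nonneg x]
        have hM := Mop_eq α p hx
        have h := congrArg (fun r => ev r x) hsum
        simp only [ev, map_mul, map_add, map_sum] at h hM ⊢
        have hr := ev_rhoPoly x
        rw [ev] at hr
        rw [hr] at h
        unfold ev at hM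
        rw [hM, h, Real.rpow_add_one hpos.ne', ← Finset.sum_mul]
        ring
    _ = 0 := by
        rw [integral_add i1 (integrable_finsetSum _ fun i _ => i2 i),
          integral_finsetSum _ fun i _ => i2 i]
        simp only [integral_twist hd hα, Finset.sum_const_zero, add_zero]
        simpa [ev] using horth Q hQ
end

section
/- Let α > 0 and n ∈ ℕ₀ with n ≠ 2. Then 𝒱^{α,1}_n = 𝒱^{α−1}_n: the space of polynomials of degree n orthogonal to all lower-degree polynomials with respect to the Sobolev inner product ⟨u,v⟩_{α,1} = ⟨∇u,∇v⟩_α + ⟨S^α_0 u, S^α_0 v⟩_α equals the space of polynomials of degree n orthogonal to all lower-degree polynomials in L²(B^d, (1−‖x‖²)^{α−1}). -/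
/-!
The inclusion `𝒱^{α-1}_n ⊆ 𝒱^{α,1}_n` rests on integration by parts,
`∫ (∂_j p) q (1-‖x‖²)^α = ∫ p (2α x_j q - (1-‖x‖²) ∂_j q) (1-‖x‖²)^(α-1)` (`wInt_pderiv_mul`).
With `∂_j q` in place of `q` the second factor on the right has degree at most `deg q`, so
`⟨∇p,∇q⟩_α = 0` for `p ∈ 𝒱^{α-1}_n` and `deg q < n`. The remaining term of the Sobolev product
contains `⟨p,1⟩_α = ⟨p,1-‖x‖²⟩_{α-1}`, which vanishes when `n ≥ 3` (`sobolev_orthogonal`); for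
`n = 1` it vanishes because both `⟨p,1⟩_α` and `⟨p,1⟩_{α-1}` are nonzero multiples of the constant
coefficient of `p` (`sobolev_orthogonal_one`).

For the converse no dimension count is needed. If `p ∈ 𝒱^{α,1}_n` and `r` is its
`⟨·,·⟩_{α-1}`-projection to degree less than `n` (`exists_projection`), then `p - r` lies in
`𝒱^{α-1}_n ⊆ 𝒱^{α,1}_n`, so `r` is Sobolev-orthogonal to itself, and `r = 0` by definiteness
(`sobIP_self_eq_zero`).

The integration by parts is done on lines (`integral_slice`), because the weight is not
differentiable on the unit sphere for `α ≤ 1`.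
-/

open MeasureTheory

/-- The weighted Lebesgue inner product
`⟨p,q⟩_β = ∫_{B^d} p(x) q(x) (1−‖x‖²)^β dx` of two polynomials. -/
noncomputable def lebIP {d : ℕ} (β : ℝ) (p q : MvPolynomial (Fin d) ℝ) : ℝ :=
  ∫ x in Metric.ball (0 : EuclideanSpace ℝ (Fin d)) 1,
    MvPolynomial.eval (fun t => x t) p * MvPolynomial.eval (fun t => x t) q *
      (1 - ‖x‖ ^ 2) ^ β

/-- The Sobolev inner product
`⟨p,q⟩_{α,1} = ⟨∇p,∇q⟩_α + ⟨S^α_0 p, S^α_0 q⟩_α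
             = ⟨∇p,∇q⟩_α + ⟨p,1⟩_α ⟨q,1⟩_α / ⟨1,1⟩_α`. -/
noncomputable def sobIP {d : ℕ} (α : ℝ) (p q : MvPolynomial (Fin d) ℝ) : ℝ :=
  (∑ i : Fin d, lebIP α (MvPolynomial.pderiv i p) (MvPolynomial.pderiv i q))
    + lebIP α p 1 * lebIP α q 1 / lebIP α (1 : MvPolynomial (Fin d) ℝ) 1

/-! ### The weighted integral of a polynomial -/

/-- The linear functional `p ↦ ∫_{B^d} p(x) (1−‖x‖²)^β dx`; both inner products are expressed
through it, as `⟨p,q⟩_β = wInt β (p * q)`. -/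
noncomputable def wInt {d : ℕ} (β : ℝ) (p : MvPolynomial (Fin d) ℝ) : ℝ :=
  ∫ x in Metric.ball (0 : EuclideanSpace ℝ (Fin d)) 1,
    MvPolynomial.eval (fun t => x t) p * (1 - ‖x‖ ^ 2) ^ β

/-- Chain rule along a curve `γ` whose velocity at `t` is the `j`-th coordinate vector. -/
lemma hasDerivAt_eval {σ : Type*} [DecidableEq σ] (j : σ) (γ : ℝ → σ → ℝ) (t : ℝ)
    (hγ : ∀ i, HasDerivAt (fun s => γ s i) (Pi.single (M := fun _ => ℝ) j 1 i) t)
    (p : MvPolynomial σ ℝ) :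
    HasDerivAt (fun s => MvPolynomial.eval (γ s) p)
      (MvPolynomial.eval (γ t) (MvPolynomial.pderiv j p)) t := by
  induction p using MvPolynomial.induction_on with
  | C a => simpa using hasDerivAt_const t a
  | add p q hp hq => 
    convert! hp.add hq using 1
    · ext s; simp
    · simp
  | mul_X p i hp =>
    convert! hp.mul (hγ i) using 1
    · ext s; simp
    · rcases eq_or_ne j i with rfl | h
      · simp; ring
      · simp [h.symm, MvPolynomial.pderiv_X_of_ne h.symm]; ring

lemma continuous_evalE {d : ℕ} (p : MvPolynomial (Fin d) ℝ) :
    Continuous fun x : EuclideanSpace ℝ (Fin d) => MvPolynomial.eval (fun t => x t) p :=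
  (MvPolynomial.continuous_eval p).comp (by fun_prop)

lemma sq_lt {d : ℕ} {x : EuclideanSpace ℝ (Fin d)} (hx : x ∈ Metric.ball 0 1) :
    0 < 1 - ‖x‖ ^ 2 := by
  have : ‖x‖ < 1 := by simpa using hx
  nlinarith [norm_nonneg x]

/-- In polar coordinates the weight becomes `r^m (1+r)^β (1-r)^β` on `[0,1)`, and the only
singularity `(1-r)^β` is integrable since `β > -1`. -/
lemma integrableOn_weight (m : ℕ) {β : ℝ} (hβ : -1 < β) :
    IntegrableOn (fun x : EuclideanSpace ℝ (Fin (m + 1)) => (1 - ‖x‖ ^ 2) ^ β)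
      (Metric.ball 0 1) := by
  let g : ℝ → ℝ := (Set.Ico 0 1).indicator fun r => (1 - r ^ 2) ^ β
  have h1 : (Metric.ball 0 1).indicator
      (fun x : EuclideanSpace ℝ (Fin (m + 1)) => (1 - ‖x‖ ^ 2) ^ β) = fun x => g ‖x‖ := by
    ext x
    by_cases hx : ‖x‖ < 1 <;> simp [g, Set.indicator, hx]
  rw [← integrable_indicator_iff Metric.isOpen_ball.measurableSet, h1,
    integrable_fun_norm_addHaar]
  have h2 : (fun y : ℝ => y ^ (Module.finrank ℝ (EuclideanSpace ℝ (Fin (m + 1))) - 1) • g y) =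
      (Set.Ico 0 1).indicator fun y => (y ^ m * (1 + y) ^ β) * (1 - y) ^ β := by
    ext y
    by_cases hy : y ∈ Set.Ico (0 : ℝ) 1
    · have : (1 - y ^ 2 : ℝ) = (1 + y) * (1 - y) := by ring
      simp only [g, Set.indicator_of_mem hy, this]
      rw [Real.mul_rpow (by linarith [hy.1]) (by linarith [hy.2])]
      simp [mul_assoc]
    · simp [g, Set.indicator_of_notMem hy]
  rw [h2]
  refine Integrable.integrableOn ?_
  rw [integrable_indicator_iff measurableSet_Ico]
  have h3 : IntervalIntegrable (fun y : ℝ => (1 - y) ^ β) volume 0 1 := by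
    have := (intervalIntegral.intervalIntegrable_rpow' (a := 0) (b := 1) hβ).comp_sub_left 1
    simpa using this.symm
  rw [← intervalIntegrable_iff_integrableOn_Ico_of_le zero_le_one]
  refine h3.continuousOn_mul ?_
  rw [Set.uIcc_of_le zero_le_one]
  refine (continuousOn_pow m).mul (ContinuousOn.rpow_const (by fun_prop) ?_)
  intro x hx
  left; linarith [hx.1]

lemma integrableOn_poly {m : ℕ} {β : ℝ} (hβ : -1 < β) (p : MvPolynomial (Fin (m + 1)) ℝ) :
    IntegrableOn (fun x : EuclideanSpace ℝ (Fin (m + 1)) =>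
      MvPolynomial.eval (fun t => x t) p * (1 - ‖x‖ ^ 2) ^ β) (Metric.ball 0 1) := by
  obtain ⟨C, hC⟩ := (isCompact_closedBall (0 : EuclideanSpace ℝ (Fin (m + 1))) 1).exists_bound_of_continuousOn
    (continuous_evalE p).continuousOn
  refine (integrableOn_weight m hβ).bdd_mul (continuous_evalE p).aestronglyMeasurable (c := C) ?_
  filter_upwards [ae_restrict_mem Metric.isOpen_ball.measurableSet] with x hx
  exact hC x (Metric.ball_subset_closedBall hx)

/-- The polynomial `1 - ‖x‖²`. -/
noncomputable def ballPoly (d : ℕ) : MvPolynomial (Fin d) ℝ := 1 - ∑ i, MvPolynomial.X i ^ 2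

lemma eval_ballPoly {d : ℕ} (x : EuclideanSpace ℝ (Fin d)) :
    MvPolynomial.eval (fun t => x t) (ballPoly d) = 1 - ‖x‖ ^ 2 := by
  simp [ballPoly, EuclideanSpace.real_norm_sq_eq]

lemma wInt_add {m : ℕ} {β : ℝ} (hβ : -1 < β) (p q : MvPolynomial (Fin (m + 1)) ℝ) :
    wInt β (p + q) = wInt β p + wInt β q := by
  simp only [wInt]
  rw [← integral_add (integrableOn_poly hβ p) (integrableOn_poly hβ q)]
  simp [add_mul]

lemma wInt_smul {d : ℕ} (β c : ℝ) (p : MvPolynomial (Fin d) ℝ) :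
    wInt β (c • p) = c * wInt β p := by
  simp only [wInt]
  rw [← integral_const_mul]
  simp [MvPolynomial.smul_eval, mul_assoc]

/-- Lowering the exponent of the weight by one costs a factor `1 - ‖x‖²`. -/
lemma wInt_raise {d : ℕ} (α : ℝ) (p : MvPolynomial (Fin d) ℝ) :
    wInt α p = wInt (α - 1) (p * ballPoly d) := by
  refine setIntegral_congr_fun Metric.isOpen_ball.measurableSet fun x hx => ?_
  have := sq_lt hx
  simp only [map_mul, eval_ballPoly, mul_assoc]
  have h := Real.rpow_add this 1 (α - 1)
  rw [add_sub_cancel, Real.rpow_one] at h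
  rw [h]

/-- Definiteness of `⟨·,·⟩_β` on polynomials: one whose square has zero weighted integral vanishes
on the ball, hence on a small box, hence identically. -/
lemma wInt_pos {m : ℕ} {β : ℝ} (hβ : -1 < β) {p : MvPolynomial (Fin (m + 1)) ℝ}
    (h : wInt β (p * p) = 0) : p = 0 := by
  have h0 := (setIntegral_eq_zero_iff_of_nonneg_ae (by
    filter_upwards [ae_restrict_mem Metric.isOpen_ball.measurableSet] with x hx
    have := sq_lt hx
    simp only [map_mul, Pi.zero_apply]
    exact mul_nonneg (mul_self_nonneg _) (by positivity)) (integrableOn_poly hβ _)).1 h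
  have h1 : (fun x : EuclideanSpace ℝ (Fin (m + 1)) => MvPolynomial.eval (fun t => x t) p)
      =ᵐ[volume.restrict (Metric.ball 0 1)] 0 := by
    filter_upwards [h0, ae_restrict_mem Metric.isOpen_ball.measurableSet] with x h0 hx
    have := Real.rpow_pos_of_pos (sq_lt hx) β
    simpa [this.ne'] using h0
  have h2 := Measure.eqOn_open_of_ae_eq h1 Metric.isOpen_ball
    (continuous_evalE p).continuousOn continuousOn_const
  have hr : (0 : ℝ) < 1 / (m + 1) := by positivity
  refine MvPolynomial.funext_set (fun _ => Set.Ioo 0 (1 / (m + 1 : ℝ)))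
    (fun _ => Set.Ioo_infinite hr) fun x hx => ?_
  have hx' : WithLp.toLp 2 x ∈ Metric.ball (0 : EuclideanSpace ℝ (Fin (m + 1))) 1 := by
    have hlt : ‖WithLp.toLp 2 x‖ ^ 2 < 1 := by
      rw [EuclideanSpace.real_norm_sq_eq]
      calc ∑ i, x i ^ 2 < ∑ i : Fin (m + 1), 1 / (m + 1 : ℝ) := by
            refine Finset.sum_lt_sum_of_nonempty (by simp) fun i _ => ?_
            have hi := hx i trivial
            have : 1 / (m + 1 : ℝ) ≤ 1 := by
              rw [div_le_one (by positivity)]; linarith [(Nat.cast_nonneg m : (0:ℝ) ≤ m)]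
            nlinarith [hi.1, hi.2]
        _ = 1 := by simp; field_simp
    rw [mem_ball_zero_iff]
    nlinarith [norm_nonneg (WithLp.toLp 2 x)]
  simpa using h2 hx'

/-! ### Partial derivatives and degrees -/

lemma eq_C_of_pderiv {σ : Type*} {p : MvPolynomial σ ℝ}
    (h : ∀ i, MvPolynomial.pderiv i p = 0) : p = MvPolynomial.C (MvPolynomial.coeff 0 p) := by
  classical
  ext m
  rw [MvPolynomial.coeff_C]
  split_ifs with hm
  · rw [hm]
  · obtain ⟨i, hi⟩ : ∃ i, m i ≠ 0 := by
      by_contra! hc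
      exact hm (Finsupp.ext fun i => (hc i).symm)
    have h1 := MvPolynomial.coeff_pderiv (i := i) p (m - Finsupp.single i 1)
    rw [h i, MvPolynomial.coeff_zero, tsub_add_cancel_of_le (by
      simpa [Nat.one_le_iff_ne_zero] using hi)] at h1
    rcases mul_eq_zero.1 h1.symm with h2 | h2
    · exact h2
    · exact absurd h2 (by positivity)

lemma totalDegree_pderiv_le {σ : Type*} (i : σ) {p : MvPolynomial σ ℝ} {k : ℕ}
    (h : p.totalDegree ≤ k + 1) : (MvPolynomial.pderiv i p).totalDegree ≤ k := by
  classical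
  refine Finset.sup_le fun m hm => ?_
  rw [MvPolynomial.mem_support_iff, MvPolynomial.coeff_pderiv] at hm
  have h1 := MvPolynomial.le_totalDegree (MvPolynomial.mem_support_iff.2 (left_ne_zero_of_mul hm))
  change (m + Finsupp.single i 1).degree ≤ _ at h1
  change m.degree ≤ k
  simp at h1
  omega

lemma totalDegree_ballPoly (d : ℕ) : (ballPoly d).totalDegree ≤ 2 := by
  refine (MvPolynomial.totalDegree_sub _ _).trans (max_le (by simp) ?_)
  refine MvPolynomial.totalDegree_finsetSum_le fun i _ => ?_
  simp [MvPolynomial.totalDegree_X_pow]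

/-! ### Integration by parts -/

lemma norm_insertNth {m : ℕ} (j : Fin (m + 1)) (t : ℝ) (y : Fin m → ℝ) :
    ‖(WithLp.toLp 2 (j.insertNth t y : Fin (m + 1) → ℝ) : EuclideanSpace ℝ (Fin (m + 1)))‖ ^ 2
      = t ^ 2 + ∑ k, y k ^ 2 := by
  rw [EuclideanSpace.real_norm_sq_eq, Fin.sum_univ_succAbove _ j]
  simp

/-- On a line parallel to the `j`-th axis the weight is `(c - t²)^α`, with `c` constant. -/
lemma hasDerivAt_slice {m : ℕ} (α : ℝ) (j : Fin (m + 1)) (p : MvPolynomial (Fin (m + 1)) ℝ)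
    (y : Fin m → ℝ) (c t : ℝ) (ht : 0 < c - t ^ 2) :
    HasDerivAt (fun t => MvPolynomial.eval (j.insertNth t y : Fin (m + 1) → ℝ) p * (c - t ^ 2) ^ α)
      (MvPolynomial.eval (j.insertNth t y : Fin (m + 1) → ℝ) (MvPolynomial.pderiv j p) *
          (c - t ^ 2) ^ α
        - 2 * α * (MvPolynomial.eval (j.insertNth t y : Fin (m + 1) → ℝ) (MvPolynomial.X j * p) *
          (c - t ^ 2) ^ (α - 1))) t := by
  have h1 := hasDerivAt_eval j (fun s => (j.insertNth s y : Fin (m + 1) → ℝ)) t (by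
    intro i
    rcases Fin.eq_self_or_eq_succAbove j i with rfl | ⟨k, rfl⟩
    · simpa using hasDerivAt_id' t
    · simpa [Fin.succAbove_ne] using hasDerivAt_const t (y k)) p
  have h2 : HasDerivAt (fun s : ℝ => c - s ^ 2) (-(2 * t)) t := by
    simpa using (hasDerivAt_pow 2 t).const_sub c
  convert! h1.mul (h2.rpow_const (p := α) (Or.inl ht.ne')) using 1
  simp
  ring

/-- The integrand of `wInt_pderiv` integrates to zero on every line parallel to the `j`-th axis: it
is the derivative of `p (1-‖x‖²)^α`, which vanishes at both ends of the chord as `α > 0`. -/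
lemma integral_slice {m : ℕ} {α : ℝ} (hα : 0 < α) (j : Fin (m + 1))
    (p : MvPolynomial (Fin (m + 1)) ℝ) (y : Fin m → ℝ) :
    ∫ t : ℝ, (Metric.ball (0 : EuclideanSpace ℝ (Fin (m + 1))) 1).indicator (fun x =>
      MvPolynomial.eval (fun t => x t) (MvPolynomial.pderiv j p) * (1 - ‖x‖ ^ 2) ^ α
        - 2 * α * (MvPolynomial.eval (fun t => x t) (MvPolynomial.X j * p) *
          (1 - ‖x‖ ^ 2) ^ (α - 1))) (WithLp.toLp 2 (j.insertNth t y)) = 0 := by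
  set c : ℝ := 1 - ∑ k, y k ^ 2 with hc
  have hball (t : ℝ) : (WithLp.toLp 2 (j.insertNth t y : Fin (m + 1) → ℝ)) ∈
      Metric.ball (0 : EuclideanSpace ℝ (Fin (m + 1))) 1 ↔ t ^ 2 < c := by
    rw [mem_ball_zero_iff, ← sq_lt_one_iff₀ (norm_nonneg _), norm_insertNth, hc, lt_sub_iff_add_lt]
  have hw (t : ℝ) : 1 - ‖(WithLp.toLp 2 (j.insertNth t y : Fin (m + 1) → ℝ) :
      EuclideanSpace ℝ (Fin (m + 1)))‖ ^ 2 = c - t ^ 2 := by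
    rw [norm_insertNth, hc]; ring
  let G : ℝ → ℝ := fun t =>
    MvPolynomial.eval (j.insertNth t y : Fin (m + 1) → ℝ) (MvPolynomial.pderiv j p) *
        (c - t ^ 2) ^ α
      - 2 * α * (MvPolynomial.eval (j.insertNth t y : Fin (m + 1) → ℝ) (MvPolynomial.X j * p) *
        (c - t ^ 2) ^ (α - 1))
  have hG : ∀ t : ℝ, (Metric.ball (0 : EuclideanSpace ℝ (Fin (m + 1))) 1).indicator (fun x =>
      MvPolynomial.eval (fun t => x t) (MvPolynomial.pderiv j p) * (1 - ‖x‖ ^ 2) ^ α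
        - 2 * α * (MvPolynomial.eval (fun t => x t) (MvPolynomial.X j * p) *
          (1 - ‖x‖ ^ 2) ^ (α - 1))) (WithLp.toLp 2 (j.insertNth t y)) =
      {t : ℝ | t ^ 2 < c}.indicator G t := by
    intro t
    by_cases ht : t ^ 2 < c
    · rw [Set.indicator_of_mem ((hball t).2 ht), Set.indicator_of_mem (by exact ht), hw]
    · rw [Set.indicator_of_notMem (fun h => ht ((hball t).1 h)),
        Set.indicator_of_notMem (by exact ht)]
  simp_rw [hG]
  rcases le_or_gt c 0 with h0 | h0
  · have : {t : ℝ | t ^ 2 < c} = ∅ := by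
      ext t; simpa using h0.trans (sq_nonneg t)
    simp [this]
  have hset : {t : ℝ | t ^ 2 < c} = Set.Ioo (-√c) √c := by
    ext t
    simp only [Set.mem_ofPred_eq, Set.mem_Ioo]
    rw [← abs_lt, Real.lt_sqrt (abs_nonneg t), sq_abs]
  rw [hset, integral_indicator measurableSet_Ioo, ← integral_Ioc_eq_integral_Ioo,
    ← intervalIntegral.integral_of_le (by linarith [Real.sqrt_nonneg c])]
  -- A non-integrable `G` would have integral `0` by convention.
  by_cases hint : IntervalIntegrable G volume (-√c) √c
  swap
  · exact intervalIntegral.integral_undef hint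
  have hcont : Continuous fun t : ℝ =>
      MvPolynomial.eval (j.insertNth t y : Fin (m + 1) → ℝ) p * (c - t ^ 2) ^ α := by
    refine ((MvPolynomial.continuous_eval p).comp ?_).mul
      (Continuous.rpow_const (by fun_prop) fun _ => Or.inr hα.le)
    fun_prop
  rw [intervalIntegral.integral_eq_sub_of_hasDerivAt_of_le (by linarith [Real.sqrt_nonneg c])
    hcont.continuousOn (fun t ht => hasDerivAt_slice α j p y c t ?_) hint]
  · simp [Real.sq_sqrt h0.le, Real.zero_rpow hα.ne']
  · rw [← hset] at ht
    exact sub_pos.2 ht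

/-- Integration by parts: `∫ (∂_j p) (1-‖x‖²)^α = 2α ∫ x_j p (1-‖x‖²)^(α-1)`. -/
lemma wInt_pderiv {m : ℕ} {α : ℝ} (hα : 0 < α) (j : Fin (m + 1))
    (p : MvPolynomial (Fin (m + 1)) ℝ) :
    wInt α (MvPolynomial.pderiv j p) = 2 * α * wInt (α - 1) (MvPolynomial.X j * p) := by
  have hi1 := integrableOn_poly (by linarith : -1 < α) (MvPolynomial.pderiv j p)
  have hi2 := (integrableOn_poly (by linarith : -1 < α - 1) (MvPolynomial.X j * p)).const_mul
    (2 * α)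
  rw [← sub_eq_zero]
  simp only [wInt]
  rw [← integral_const_mul, ← integral_sub hi1 hi2,
    ← integral_indicator Metric.isOpen_ball.measurableSet]
  -- `e (t, y)` inserts `t` as the `j`-th coordinate, so Fubini reduces to lines in direction `j`.
  let e := (MeasurableEquiv.piFinSuccAbove (fun _ : Fin (m + 1) => ℝ) j).symm.trans
    (MeasurableEquiv.toLp 2 (Fin (m + 1) → ℝ))
  have he : MeasurePreserving e :=
    (PiLp.volume_preserving_toLp (Fin (m + 1))).comp
      (volume_preserving_piFinSuccAbove (fun _ : Fin (m + 1) => ℝ) j).symm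
  have hint := (integrable_indicator_iff Metric.isOpen_ball.measurableSet).2 (hi1.sub hi2)
  rw [← he.integral_comp e.measurableEmbedding, Measure.volume_eq_prod, integral_prod_symm]
  · refine integral_eq_zero_of_ae (.of_forall fun y => ?_)
    exact integral_slice hα j p y
  · exact (he.integrable_comp_emb e.measurableEmbedding).2 hint

/-! ### The two inner products -/

lemma lebIP_eq {d : ℕ} (β : ℝ) (p q : MvPolynomial (Fin d) ℝ) : lebIP β p q = wInt β (p * q) := by
  simp [lebIP, wInt]

/-- The weighted integral as a linear functional. -/
noncomputable def wIntL (m : ℕ) {β : ℝ} (hβ : -1 < β) : MvPolynomial (Fin (m + 1)) ℝ →ₗ[ℝ] ℝ where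
  toFun := wInt β
  map_add' := wInt_add hβ
  map_smul' c p := wInt_smul β c p

lemma wInt_sub {m : ℕ} {β : ℝ} (hβ : -1 < β) (p q : MvPolynomial (Fin (m + 1)) ℝ) :
    wInt β (p - q) = wInt β p - wInt β q := (wIntL m hβ).map_sub p q

lemma wInt_zero {d : ℕ} (β : ℝ) : wInt β (0 : MvPolynomial (Fin d) ℝ) = 0 := by
  simp [wInt]

lemma wInt_C {d : ℕ} (β c : ℝ) :
    wInt β (MvPolynomial.C c : MvPolynomial (Fin d) ℝ) = c * wInt β (1 : MvPolynomial (Fin d) ℝ) := by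
  rw [← wInt_smul, MvPolynomial.smul_eq_C_mul, mul_one]

lemma wInt_one_ne_zero (m : ℕ) {β : ℝ} (hβ : -1 < β) :
    wInt β (1 : MvPolynomial (Fin (m + 1)) ℝ) ≠ 0 := fun h =>
  one_ne_zero (wInt_pos hβ (p := (1 : MvPolynomial (Fin (m + 1)) ℝ)) (by rwa [one_mul]))

lemma sobIP_eq {d : ℕ} (α : ℝ) (p q : MvPolynomial (Fin d) ℝ) :
    sobIP α p q = (∑ i, wInt α (MvPolynomial.pderiv i p * MvPolynomial.pderiv i q))
      + wInt α p * wInt α q / wInt α (1 : MvPolynomial (Fin d) ℝ) := by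
  simp [sobIP, lebIP_eq]

lemma sobIP_sub_left {m : ℕ} {α : ℝ} (hα : -1 < α) (p p' q : MvPolynomial (Fin (m + 1)) ℝ) :
    sobIP α (p - p') q = sobIP α p q - sobIP α p' q := by
  simp only [sobIP_eq, map_sub, sub_mul, wInt_sub hα, Finset.sum_sub_distrib]
  ring

lemma wInt_self_nonneg {d : ℕ} (β : ℝ) (p : MvPolynomial (Fin d) ℝ) : 0 ≤ wInt β (p * p) := by
  refine setIntegral_nonneg Metric.isOpen_ball.measurableSet fun x hx => ?_
  have := sq_lt hx
  simp only [map_mul]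
  exact mul_nonneg (mul_self_nonneg _) (by positivity)

lemma sobIP_self_eq_zero {m : ℕ} {α : ℝ} (hα : -1 < α) {p : MvPolynomial (Fin (m + 1)) ℝ}
    (h : sobIP α p p = 0) : p = 0 := by
  have h1 : 0 < wInt α (1 : MvPolynomial (Fin (m + 1)) ℝ) := by
    refine lt_of_le_of_ne ?_ (wInt_one_ne_zero m hα).symm
    simpa using wInt_self_nonneg α (1 : MvPolynomial (Fin (m + 1)) ℝ)
  have h2 : 0 ≤ ∑ i, wInt α (MvPolynomial.pderiv i p * MvPolynomial.pderiv i p) :=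
    Finset.sum_nonneg fun i _ => wInt_self_nonneg α _
  have h3 : 0 ≤ wInt α p * wInt α p / wInt α (1 : MvPolynomial (Fin (m + 1)) ℝ) :=
    div_nonneg (mul_self_nonneg _) h1.le
  rw [sobIP_eq] at h
  have h4 := (Finset.sum_eq_zero_iff_of_nonneg fun i _ => wInt_self_nonneg α _).1
    (by linarith : ∑ i, wInt α (MvPolynomial.pderiv i p * MvPolynomial.pderiv i p) = 0)
  have h5 : wInt α p = 0 := by
    have : wInt α p * wInt α p / wInt α (1 : MvPolynomial (Fin (m + 1)) ℝ) = 0 := by linarith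
    simpa [h1.ne'] using this
  have h6 := eq_C_of_pderiv fun i => wInt_pos hα (h4 i (Finset.mem_univ i))
  rw [h6, wInt_C] at h5
  rw [h6, (mul_eq_zero.1 h5).resolve_right h1.ne', map_zero]

/-- The adjoint of `∂_j : L²((1-‖x‖²)^(α-1)) → L²((1-‖x‖²)^α)` on polynomials is the degree-raising
operator `q ↦ 2α x_j q - (1-‖x‖²) ∂_j q`. -/
lemma wInt_pderiv_mul {m : ℕ} {α : ℝ} (hα : 0 < α) (j : Fin (m + 1))
    (p q : MvPolynomial (Fin (m + 1)) ℝ) :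
    wInt α (MvPolynomial.pderiv j p * q) = wInt (α - 1)
      (p * ((2 * α) • (MvPolynomial.X j * q) - MvPolynomial.pderiv j q * ballPoly (m + 1))) := by
  have h1 : MvPolynomial.pderiv j p * q =
      MvPolynomial.pderiv j (p * q) - p * MvPolynomial.pderiv j q := by
    rw [MvPolynomial.pderiv_mul]; ring
  rw [h1, wInt_sub (by linarith), wInt_pderiv hα, ← wInt_smul, wInt_raise α (p * _),
    ← wInt_sub (by linarith)]
  congr 1
  simp only [MvPolynomial.smul_eq_C_mul]
  ring

/-! ### Comparison of the orthogonal spaces -/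

/-- In degree `k + 3 ≥ 3` the polynomial `1 - ‖x‖²` has lower degree, which forces `⟨p,1⟩_α = 0`; the
gradient part vanishes because the adjoint of `∂_j` maps `∂_j q` to degree at most `deg q`. -/
lemma sobolev_orthogonal {m k : ℕ} {α : ℝ} (hα : 0 < α) {p : MvPolynomial (Fin (m + 1)) ℝ}
    (hp : ∀ q : MvPolynomial (Fin (m + 1)) ℝ, q.totalDegree < k + 3 → lebIP (α - 1) p q = 0)
    {q : MvPolynomial (Fin (m + 1)) ℝ} (hq : q.totalDegree < k + 3) : sobIP α p q = 0 := by
  have h1 : wInt α p = 0 := by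
    rw [wInt_raise, ← lebIP_eq]
    exact hp _ ((totalDegree_ballPoly _).trans_lt (by omega))
  rw [sobIP_eq, h1, zero_mul, zero_div, add_zero]
  refine Finset.sum_eq_zero fun j _ => ?_
  rw [wInt_pderiv_mul hα, ← lebIP_eq]
  refine hp _ (Nat.lt_succ_of_le ?_)
  have d1 : (MvPolynomial.pderiv j q).totalDegree ≤ k + 1 := totalDegree_pderiv_le j (by omega)
  have d2 : (MvPolynomial.pderiv j (MvPolynomial.pderiv j q)).totalDegree ≤ k :=
    totalDegree_pderiv_le j d1
  refine (MvPolynomial.totalDegree_sub _ _).trans (max_le ?_ ?_)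
  · refine (MvPolynomial.totalDegree_smul_le _ _).trans
      ((MvPolynomial.totalDegree_mul _ _).trans ?_)
    rw [MvPolynomial.totalDegree_X]
    omega
  · exact (MvPolynomial.totalDegree_mul _ _).trans (add_le_add d2 (totalDegree_ballPoly _))

/-- Linear monomials have mean zero: integration by parts applied to the constant `1`. -/
lemma wInt_X {m : ℕ} {β : ℝ} (hβ : -1 < β) (j : Fin (m + 1)) :
    wInt β (MvPolynomial.X j : MvPolynomial (Fin (m + 1)) ℝ) = 0 := by
  have h := wInt_pderiv (by linarith : 0 < β + 1) j 1
  rw [MvPolynomial.pderiv_one, wInt_zero, mul_one, add_sub_cancel_right] at h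
  exact (mul_eq_zero.1 h.symm).resolve_left (by linarith)

lemma wInt_of_totalDegree_le_one {m : ℕ} {β : ℝ} (hβ : -1 < β)
    {p : MvPolynomial (Fin (m + 1)) ℝ} (hp : p.totalDegree ≤ 1) :
    wInt β p = MvPolynomial.coeff 0 p * wInt β (1 : MvPolynomial (Fin (m + 1)) ℝ) := by
  let c j := MvPolynomial.coeff 0 (MvPolynomial.pderiv j p)
  have hc j : MvPolynomial.pderiv j p = MvPolynomial.C (c j) :=
    MvPolynomial.totalDegree_eq_zero_iff_eq_C.1
      (Nat.le_zero.1 (totalDegree_pderiv_le j (by simpa using hp)))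
  have h : p - ∑ j, c j • MvPolynomial.X j = MvPolynomial.C (MvPolynomial.coeff 0 p) := by
    rw [eq_C_of_pderiv (p := p - ∑ j, c j • MvPolynomial.X j)]
    · simp [MvPolynomial.coeff_sum]
    · intro i
      simp [hc, MvPolynomial.pderiv_X, Pi.single_apply, MvPolynomial.smul_eq_C_mul]
  have h2 : wInt β (∑ j, c j • MvPolynomial.X j) = 0 := by
    change wIntL m hβ _ = 0
    rw [map_sum]
    refine Finset.sum_eq_zero fun j _ => ?_
    rw [map_smul]
    change c j • wInt β _ = 0
    rw [wInt_X hβ, smul_zero]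
  rw [← wInt_C, ← h, wInt_sub hβ, h2, sub_zero]

lemma sobolev_orthogonal_one {m : ℕ} {α : ℝ} (hα : 0 < α) {p : MvPolynomial (Fin (m + 1)) ℝ}
    (hd : p.totalDegree ≤ 1) (hp : lebIP (α - 1) p 1 = 0)
    {q : MvPolynomial (Fin (m + 1)) ℝ} (hq : q.totalDegree < 1) : sobIP α p q = 0 := by
  rw [MvPolynomial.totalDegree_eq_zero_iff_eq_C.1 (Nat.lt_one_iff.1 hq)]
  rw [lebIP_eq, mul_one, wInt_of_totalDegree_le_one (by linarith) hd] at hp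
  rw [sobIP_eq, wInt_of_totalDegree_le_one (by linarith) hd,
    (mul_eq_zero.1 hp).resolve_right (wInt_one_ne_zero m (by linarith))]
  simp [wInt_zero]

/-- Orthogonal projection onto the polynomials of degree at most `k`: the Gram map of a definite
form on a finite-dimensional space is injective, hence onto the dual. -/
lemma exists_projection {m : ℕ} {β : ℝ} (hβ : -1 < β) (k : ℕ) (p : MvPolynomial (Fin (m + 1)) ℝ) :
    ∃ r : MvPolynomial (Fin (m + 1)) ℝ, r.totalDegree ≤ k ∧
      ∀ q : MvPolynomial (Fin (m + 1)) ℝ, q.totalDegree ≤ k → lebIP β (p - r) q = 0 := by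
  let W := MvPolynomial.restrictTotalDegree (Fin (m + 1)) ℝ k
  let B : MvPolynomial (Fin (m + 1)) ℝ →ₗ[ℝ] W →ₗ[ℝ] ℝ :=
    ((LinearMap.mul ℝ (MvPolynomial (Fin (m + 1)) ℝ)).compr₂ (wIntL m hβ)).compl₂ W.subtype
  have hinj : Function.Injective (B.comp W.subtype) := by
    rw [injective_iff_map_eq_zero]
    intro a ha
    have h := LinearMap.congr_fun ha a
    exact Subtype.ext (wInt_pos hβ h)
  have hsurj := (LinearMap.injective_iff_surjective_of_finrank_eq_finrank
    (Subspace.dual_finrank_eq (K := ℝ) (V := W)).symm).1 hinj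
  obtain ⟨r, hr⟩ := hsurj (B p)
  refine ⟨r, (MvPolynomial.mem_restrictTotalDegree _ _ _).1 r.2, fun q hq => ?_⟩
  have h := LinearMap.congr_fun hr ⟨q, (MvPolynomial.mem_restrictTotalDegree _ _ _).2 hq⟩
  rw [lebIP_eq, sub_mul, wInt_sub hβ, sub_eq_zero]
  exact h.symm

/-- For `α > 0` and `n ≠ 2`, `𝒱^{α,1}_n = 𝒱^{α−1}_n`. -/
theorem stmt14 {d : ℕ} (hd : 1 ≤ d) (α : ℝ) (hα : 0 < α) (n : ℕ) (hn : n ≠ 2) :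
    {p : MvPolynomial (Fin d) ℝ | p.totalDegree ≤ n ∧
        ∀ q : MvPolynomial (Fin d) ℝ, q.totalDegree < n → sobIP α p q = 0}
      = {p : MvPolynomial (Fin d) ℝ | p.totalDegree ≤ n ∧
          ∀ q : MvPolynomial (Fin d) ℝ, q.totalDegree < n → lebIP (α - 1) p q = 0} := by
  obtain ⟨m, rfl⟩ : ∃ m, d = m + 1 := ⟨d - 1, by omega⟩
  have key : ∀ p : MvPolynomial (Fin (m + 1)) ℝ, p.totalDegree ≤ n →
      (∀ q : MvPolynomial (Fin (m + 1)) ℝ, q.totalDegree < n → lebIP (α - 1) p q = 0) →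
      ∀ q : MvPolynomial (Fin (m + 1)) ℝ, q.totalDegree < n → sobIP α p q = 0 := by
    intro p hd hp q hq
    match n, hn with
    | 0, _ => exact absurd hq (Nat.not_lt_zero _)
    | 1, _ => exact sobolev_orthogonal_one hα hd (hp 1 (by simp)) hq
    | k + 3, _ => exact sobolev_orthogonal hα hp hq
  ext p
  refine ⟨fun ⟨hd, hp⟩ => ⟨hd, ?_⟩, fun ⟨hd, hp⟩ => ⟨hd, key p hd hp⟩⟩
  rcases n with _ | k
  · intro q hq
    exact absurd hq (Nat.not_lt_zero _)
  -- Subtract from `p` its projection `r`, so that `p - r ∈ 𝒱^{α-1}_n ⊆ 𝒱^{α,1}_n`; then `r` itself is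
  -- Sobolev-orthogonal to all lower degrees, in particular to `r`, so `r = 0`.
  obtain ⟨r, hr, hpr⟩ := exists_projection (by linarith : -1 < α - 1) k p
  have h1 : (p - r).totalDegree ≤ k + 1 :=
    (MvPolynomial.totalDegree_sub _ _).trans (max_le hd (by omega))
  have h2 := key (p - r) h1 (fun q hq => hpr q (Nat.le_of_lt_succ hq)) r (Nat.lt_succ_of_le hr)
  rw [sobIP_sub_left (by linarith), hp r (Nat.lt_succ_of_le hr), zero_sub, neg_eq_zero] at h2
  rw [sobIP_self_eq_zero (by linarith) h2, sub_zero] at hpr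
  exact fun q hq => hpr q (Nat.le_of_lt_succ hq)
end

section
/- Let α > −1, n ≥ 0, and let p_n ∈ 𝒱^{α,1}_n be a Sobolev orthogonal polynomial of degree n with respect to ⟨u,v⟩_{α,1} = ⟨∇u,∇v⟩_α + ⟨S^α_0 u, S^α_0 v⟩_α. Then p_n satisfies the weak Sturm–Liouville identity: for all q ∈ C²(closed ball), Σ_{k=1}^d B^α(∂_k p_n, ∂_k q) = λ^{(α,1)}_n ⟨p_n, q⟩_{α,1}, where λ^{(α,1)}_n = 0 for n ≤ 1 and λ^{(α,1)}_n = (n−1)(n−1+d+2α) for n ≥ 2, and B^α(f,g) = ⟨∇f,∇g⟩_{α+1} + Σ_{1≤i<j≤d} ⟨D_{i,j}f, D_{i,j}g⟩_α. -/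
/-!
Write `E = Σ x_i ∂_i` and `c = d + 2α`.  By Lagrange's identity the integrand of `B^α(f, g)` is
`(∇f · ∇g - (E f)(E g)) W_α = (V · ∇g) W_α` with `V = ∇f - (E f) x`.  Since `x · V = (1 - ‖x‖²) E f`,
integration by parts leaves no boundary term for any `α > -1` (`integral_div_eq_zero`, proved with a
cutoff near the sphere), and for a polynomial `f` one gets `B^α(f, g) = ⟨L f, g⟩_α` with
`L = -Δ + E² + c E` (`Bform_polyFun`).

From `E ∂_k = ∂_k (E - 1)` it follows that `L ∂_k = ∂_k M` with `M = -Δ + (E - 1)² + c (E - 1)`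
(`pderiv_liftOp`), so `Σ_k B^α(∂_k p, ∂_k q) = ⟨∇(M p), ∇q⟩_α` (`sum_Bform_pd`).  In particular `M` is
symmetric on polynomials for `⟨∇·, ∇·⟩_α`.  It acts on the part of degree `n` as
`λ = (n - 1)(n - 1 + c)` modulo lower degree (`totalDegree_liftOp_sub_lt`), so for `n ≥ 1` both
`s = (M - λ) p` and `(M - λ) s` have degree `< n`.  Orthogonality of `p` then gives
`⟨∇s, ∇s⟩_α = ⟨∇p, ∇(M - λ) s⟩_α = 0`, hence `∇(M p) = λ ∇p`, which is the claim because `p` has mean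
zero.  For `n = 1` the factor `λ` is `0`, and for `n = 0` both sides vanish.
-/

open MeasureTheory

/-- The sesquilinear form
`B^α(f,g) = ⟨∇f,∇g⟩_{α+1} + Σ_{1≤i<j≤d} ⟨D_{i,j}f, D_{i,j}g⟩_α`. -/
noncomputable def Bform {d : ℕ} (α : ℝ) (f g : EuclideanSpace ℝ (Fin d) → ℝ) : ℝ :=
  (∫ x in Metric.ball (0 : EuclideanSpace ℝ (Fin d)) 1,
      (∑ i : Fin d, pd i f x * pd i g x) * (1 - ‖x‖ ^ 2) ^ (α + 1))
    + ∑ i : Fin d, ∑ j : Fin d,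
        if i < j then
          ∫ x in Metric.ball (0 : EuclideanSpace ℝ (Fin d)) 1,
            Dop i j f x * Dop i j g x * (1 - ‖x‖ ^ 2) ^ α
        else 0

/-- The weighted Lebesgue inner product of two functions on the ball. -/
noncomputable def lebF {d : ℕ} (β : ℝ) (f g : EuclideanSpace ℝ (Fin d) → ℝ) : ℝ :=
  ∫ x in Metric.ball (0 : EuclideanSpace ℝ (Fin d)) 1, f x * g x * (1 - ‖x‖ ^ 2) ^ β

/-- The Sobolev inner product `⟨f,g⟩_{α,1} = ⟨∇f,∇g⟩_α + ⟨f,1⟩_α ⟨g,1⟩_α / ⟨1,1⟩_α`. -/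
noncomputable def sobF {d : ℕ} (α : ℝ) (f g : EuclideanSpace ℝ (Fin d) → ℝ) : ℝ :=
  (∫ x in Metric.ball (0 : EuclideanSpace ℝ (Fin d)) 1,
      (∑ i : Fin d, pd i f x * pd i g x) * (1 - ‖x‖ ^ 2) ^ α)
    + lebF α f (fun _ => 1) * lebF α g (fun _ => 1) / lebF (d := d) α (fun _ => 1) (fun _ => 1)

/-! ### Polynomial differential operators -/

section Algebra
open MvPolynomial

variable {d : ℕ}

/-- The Euler operator `E = Σ_i X_i ∂_i` on polynomials. -/
noncomputable def eulerOp (f : MvPolynomial (Fin d) ℝ) : MvPolynomial (Fin d) ℝ :=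
  ∑ i : Fin d, X i * pderiv i f

/-- The Laplacian on polynomials. -/
noncomputable def lapOp (f : MvPolynomial (Fin d) ℝ) : MvPolynomial (Fin d) ℝ :=
  ∑ i : Fin d, pderiv i (pderiv i f)

/-- The operator `L = -Δ + E² + c E`; for `c = d + 2α` it is the Sturm–Liouville operator
associated with `B^α`. -/
noncomputable def slOp (c : ℝ) (f : MvPolynomial (Fin d) ℝ) : MvPolynomial (Fin d) ℝ :=
  -lapOp f + eulerOp (eulerOp f) + C c * eulerOp f

/-- The operator `M = -Δ + (E - 1)² + c (E - 1)`, written out in powers of `E`. -/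
noncomputable def liftOp (c : ℝ) (f : MvPolynomial (Fin d) ℝ) : MvPolynomial (Fin d) ℝ :=
  -lapOp f + eulerOp (eulerOp f) + C (c - 2) * eulerOp f + C (1 - c) * f

lemma pderiv_comm' (i k : Fin d) (f : MvPolynomial (Fin d) ℝ) :
    pderiv k (pderiv i f) = pderiv i (pderiv k f) := by
  ext m
  simp only [coeff_pderiv]
  rw [add_right_comm m (Finsupp.single k 1)]
  by_cases h : i = k
  · subst h; rfl
  · have h' : k ≠ i := fun e => h e.symm
    simp [h, h']
    ring

lemma pderiv_lapOp (k : Fin d) (f : MvPolynomial (Fin d) ℝ) :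
    pderiv k (lapOp f) = lapOp (pderiv k f) := by
  simp only [lapOp, map_sum]
  refine Finset.sum_congr rfl fun i _ => ?_
  rw [pderiv_comm' i k, pderiv_comm' i k]

lemma pderiv_eulerOp (k : Fin d) (f : MvPolynomial (Fin d) ℝ) :
    pderiv k (eulerOp f) = eulerOp (pderiv k f) + pderiv k f := by
  simp only [eulerOp, map_sum, Derivation.leibniz, smul_eq_mul, pderiv_X, pderiv_comm' _ k,
    Finset.sum_add_distrib]
  congr 1
  simp [Pi.single_apply]

lemma eulerOp_add (f g : MvPolynomial (Fin d) ℝ) : eulerOp (f + g) = eulerOp f + eulerOp g := by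
  simp [eulerOp, mul_add, Finset.sum_add_distrib]

/-- The commutation relation `L ∂_k = ∂_k M`, a consequence of `E ∂_k = ∂_k (E - 1)`. -/
lemma pderiv_liftOp (c : ℝ) (k : Fin d) (f : MvPolynomial (Fin d) ℝ) :
    pderiv k (liftOp c f) = slOp c (pderiv k f) := by
  simp only [liftOp, slOp, map_add, map_neg, pderiv_C_mul, pderiv_lapOp, pderiv_eulerOp,
    eulerOp_add]
  simp only [C_sub, C_1]
  have : (C 2 : MvPolynomial (Fin d) ℝ) = 2 := map_ofNat C 2
  rw [this]
  ring

lemma eulerOp_monomial (s : Fin d →₀ ℕ) (a : ℝ) :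
    eulerOp (monomial s a) = monomial s ((s.degree : ℝ) * a) := by
  have := (isHomogeneous_monomial (R := ℝ) (d := s) (n := s.degree) a rfl).sum_X_mul_pderiv
  rw [eulerOp, this, smul_monomial, nsmul_eq_mul]

lemma liftOp_sum {ι : Type*} (c : ℝ) (t : Finset ι) (f : ι → MvPolynomial (Fin d) ℝ) :
    liftOp c (∑ i ∈ t, f i) = ∑ i ∈ t, liftOp c (f i) := by
  have h1 : ∀ g : ι → MvPolynomial (Fin d) ℝ,
      eulerOp (∑ i ∈ t, g i) = ∑ i ∈ t, eulerOp (g i) := fun g => by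
    simp only [eulerOp, map_sum, Finset.mul_sum]
    exact Finset.sum_comm
  have h2 : lapOp (∑ i ∈ t, f i) = ∑ i ∈ t, lapOp (f i) := by
    simp only [lapOp, map_sum]
    exact Finset.sum_comm
  simp only [liftOp, h1, h2, Finset.sum_add_distrib, Finset.sum_neg_distrib, Finset.mul_sum]

lemma totalDegree_lapOp_monomial_le (s : Fin d →₀ ℕ) (a : ℝ) (n : ℕ) (hn : 1 ≤ n)
    (hs : s.degree ≤ n) : (lapOp (monomial s a)).totalDegree ≤ n - 1 := by
  refine totalDegree_finsetSum_le fun i _ => ?_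
  rw [pderiv_monomial, pderiv_monomial]
  by_cases h : s i = 0
  · simp [h]
  refine (totalDegree_monomial_le _ _).trans ?_
  show (s - Finsupp.single i 1 - Finsupp.single i 1).degree ≤ n - 1
  have h1 : s - Finsupp.single i 1 + Finsupp.single i 1 = s := Finsupp.sub_add_single_one_cancel h
  have h2 := congrArg Finsupp.degree h1
  have h3 : (s - Finsupp.single i 1 - Finsupp.single i 1).degree
      ≤ (s - Finsupp.single i 1).degree := Finsupp.degree_mono tsub_le_self
  simp only [map_add, Finsupp.degree_single] at h2
  omega

/-- `M` preserves the degree filtration and acts on the top degree part as the scalar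
`(n-1)(n-1+c)`. -/
lemma totalDegree_liftOp_sub_lt (c : ℝ) (n : ℕ) (hn : 1 ≤ n) (p : MvPolynomial (Fin d) ℝ)
    (hp : p.totalDegree ≤ n) :
    (liftOp c p - C (((n : ℝ) - 1) * ((n : ℝ) - 1 + c)) * p).totalDegree < n := by
  suffices h : (liftOp c p - C (((n : ℝ) - 1) * ((n : ℝ) - 1 + c)) * p).totalDegree ≤ n - 1 by
    omega
  have e : liftOp c p - C (((n : ℝ) - 1) * ((n : ℝ) - 1 + c)) * p
      = ∑ s ∈ p.support, (liftOp c (monomial s (p.coeff s))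
        - C (((n : ℝ) - 1) * ((n : ℝ) - 1 + c)) * monomial s (p.coeff s)) := by
    rw [Finset.sum_sub_distrib, ← liftOp_sum, ← Finset.mul_sum, ← as_sum]
  rw [e]
  refine totalDegree_finsetSum_le fun s hs => ?_
  have hsn : s.degree ≤ n := (le_totalDegree hs).trans hp
  have key : liftOp c (monomial s (p.coeff s))
        - C (((n : ℝ) - 1) * ((n : ℝ) - 1 + c)) * monomial s (p.coeff s)
      = -lapOp (monomial s (p.coeff s)) + monomial s
        ((((s.degree : ℝ) - 1) * ((s.degree : ℝ) - 1 + c)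
          - ((n : ℝ) - 1) * ((n : ℝ) - 1 + c)) * p.coeff s) := by
    simp only [liftOp, eulerOp_monomial, C_mul_monomial, add_assoc, ← map_add, add_sub_assoc,
      ← map_sub]
    congr 2
    ring
  rw [key]
  refine (totalDegree_add _ _).trans (max_le ?_ ?_)
  · rw [totalDegree_neg]
    exact totalDegree_lapOp_monomial_le s _ n hn hsn
  · rcases hsn.eq_or_lt with h | h
    · simp [h]
    · exact (totalDegree_monomial_le _ _).trans (by show s.degree ≤ _; omega)

end Algebra

/-! ### Bounded functions and the weight on the ball -/

section Analysis
open Metric Set Filter Topology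

variable {d : ℕ}

/-- The function on Euclidean space defined by a polynomial. -/
noncomputable def polyFun (p : MvPolynomial (Fin d) ℝ) (x : EuclideanSpace ℝ (Fin d)) : ℝ :=
  MvPolynomial.eval (fun t => x t) p

lemma contDiff_polyFun (p : MvPolynomial (Fin d) ℝ) (n : WithTop ℕ∞) :
    ContDiff ℝ n (polyFun p) := by
  induction p using MvPolynomial.induction_on with
  | C a =>
    have : polyFun (MvPolynomial.C a : MvPolynomial (Fin d) ℝ) = fun _ => a := by
      ext x; simp [polyFun]
    rw [this]; exact contDiff_const
  | add p q hp hq =>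
    have : polyFun (p + q) = fun x => polyFun p x + polyFun q x := by
      ext x; simp [polyFun]
    rw [this]; exact hp.add hq
  | mul_X p i hp =>
    have : polyFun (p * MvPolynomial.X i) = fun x => polyFun p x * x i := by
      ext x; simp [polyFun]
    rw [this]
    exact hp.mul (by fun_prop)

lemma pd_coord (i j : Fin d) (x : EuclideanSpace ℝ (Fin d)) :
    pd i (fun y => y j) x = if i = j then 1 else 0 := by
  have : HasFDerivAt (fun y : EuclideanSpace ℝ (Fin d) => y j)
      (EuclideanSpace.proj j : EuclideanSpace ℝ (Fin d) →L[ℝ] ℝ) x :=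
    (EuclideanSpace.proj j : EuclideanSpace ℝ (Fin d) →L[ℝ] ℝ).hasFDerivAt
  rw [pd, this.fderiv]
  simp [eq_comm]

lemma pd_mul {f g : EuclideanSpace ℝ (Fin d) → ℝ} {x : EuclideanSpace ℝ (Fin d)} (i : Fin d)
    (hf : DifferentiableAt ℝ f x) (hg : DifferentiableAt ℝ g x) :
    pd i (fun y => f y * g y) x = pd i f x * g x + f x * pd i g x := by
  simp only [pd]
  rw [fderiv_fun_mul hf hg]
  simp
  ring

lemma pd_polyFun (i : Fin d) (p : MvPolynomial (Fin d) ℝ) :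
    pd i (polyFun p) = polyFun (MvPolynomial.pderiv i p) := by
  have hd : ∀ (p : MvPolynomial (Fin d) ℝ) x, DifferentiableAt ℝ (polyFun p) x := fun p x =>
    (contDiff_polyFun p 1).differentiable (by simp) x
  induction p using MvPolynomial.induction_on with
  | C a =>
    have : polyFun (MvPolynomial.C a : MvPolynomial (Fin d) ℝ) = fun _ => a := by
      ext x; simp [polyFun]
    ext x; simp [this, pd]; simp [polyFun]
  | add p q hp hq =>
    have : polyFun (p + q) = fun x => polyFun p x + polyFun q x := by
      ext x; simp [polyFun]
    ext x
    have e := congrFun hp x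
    have e' := congrFun hq x
    simp only [pd] at e e' ⊢
    rw [this, fderiv_fun_add (hd p x) (hd q x)]
    simp [e, e', polyFun]
  | mul_X p j hp =>
    have : polyFun (p * MvPolynomial.X j) = fun x => polyFun p x * x j := by
      ext x; simp [polyFun]
    ext x
    rw [this, pd_mul i (hd p x) (by fun_prop), hp, pd_coord]
    simp only [polyFun, MvPolynomial.pderiv_mul, MvPolynomial.pderiv_X, map_add, map_mul,
      MvPolynomial.eval_X]
    by_cases h : i = j
    · subst h; simp
    · simp [h, Ne.symm h]

/-- Functions that are continuous and bounded on the open unit ball. -/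
def BddCont (F : EuclideanSpace ℝ (Fin d) → ℝ) : Prop :=
  ContinuousOn F (ball 0 1) ∧ ∃ C, ∀ x ∈ ball (0 : EuclideanSpace ℝ (Fin d)) 1, |F x| ≤ C

lemma BddCont.of_closedBall {F : EuclideanSpace ℝ (Fin d) → ℝ}
    (hF : ContinuousOn F (closedBall 0 1)) : BddCont F := by
  refine ⟨hF.mono ball_subset_closedBall, ?_⟩
  obtain ⟨C, hC⟩ := (isCompact_closedBall _ _).exists_bound_of_continuousOn hF
  exact ⟨C, fun x hx => hC x (ball_subset_closedBall hx)⟩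

lemma BddCont.congr {F G : EuclideanSpace ℝ (Fin d) → ℝ} (hF : BddCont F)
    (h : EqOn G F (ball 0 1)) : BddCont G := by
  refine ⟨hF.1.congr h, ?_⟩
  obtain ⟨C, hC⟩ := hF.2
  exact ⟨C, fun x hx => by rw [h hx]; exact hC x hx⟩

lemma BddCont.of_continuous {F : EuclideanSpace ℝ (Fin d) → ℝ} (hF : Continuous F) :
    BddCont F := .of_closedBall hF.continuousOn

lemma BddCont.polyFun (p : MvPolynomial (Fin d) ℝ) : BddCont (polyFun p) :=
  .of_continuous (contDiff_polyFun p 0).continuous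

lemma BddCont.mul {F G : EuclideanSpace ℝ (Fin d) → ℝ} (hF : BddCont F) (hG : BddCont G) :
    BddCont (fun x => F x * G x) := by
  refine ⟨hF.1.mul hG.1, ?_⟩
  obtain ⟨C, hC⟩ := hF.2
  obtain ⟨D, hD⟩ := hG.2
  refine ⟨C * D, fun x hx => ?_⟩
  rw [abs_mul]
  exact mul_le_mul (hC x hx) (hD x hx) (abs_nonneg _) ((abs_nonneg _).trans (hC x hx))

lemma BddCont.add {F G : EuclideanSpace ℝ (Fin d) → ℝ} (hF : BddCont F) (hG : BddCont G) :
    BddCont (fun x => F x + G x) := by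
  refine ⟨hF.1.add hG.1, ?_⟩
  obtain ⟨C, hC⟩ := hF.2
  obtain ⟨D, hD⟩ := hG.2
  exact ⟨C + D, fun x hx => (abs_add_le _ _).trans (add_le_add (hC x hx) (hD x hx))⟩

lemma BddCont.const (c : ℝ) : BddCont (fun _ : EuclideanSpace ℝ (Fin d) => c) :=
  .of_continuous continuous_const

lemma BddCont.coord (i : Fin d) : BddCont (fun x : EuclideanSpace ℝ (Fin d) => x i) :=
  .of_continuous (by fun_prop)

lemma BddCont.sub {F G : EuclideanSpace ℝ (Fin d) → ℝ} (hF : BddCont F) (hG : BddCont G) :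
    BddCont (fun x => F x - G x) :=
  (hF.add ((BddCont.const (-1)).mul hG)).congr fun x _ => by simp; ring

lemma BddCont.sum {ι : Type*} (s : Finset ι) {F : ι → EuclideanSpace ℝ (Fin d) → ℝ}
    (hF : ∀ i ∈ s, BddCont (F i)) : BddCont (fun x => ∑ i ∈ s, F i x) := by
  classical
  induction s using Finset.induction_on with
  | empty => simpa using BddCont.const 0
  | insert a s ha ih =>
    refine ((hF a (by simp)).add (ih fun i hi => hF i (by simp [hi]))).congr fun x _ => ?_
    simp [Finset.sum_insert ha]

/-- The weight is integrable because, in polar coordinates, it is dominated near the sphere by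
`(1 - r)^α` with `α > -1`. -/
lemma integrableOn_weight_s16 (hd : 1 ≤ d) {α : ℝ} (hα : -1 < α) :
    IntegrableOn (fun x : EuclideanSpace ℝ (Fin d) => (1 - ‖x‖ ^ 2) ^ α) (ball 0 1) := by
  have : Nonempty (Fin d) := ⟨⟨0, hd⟩⟩
  have : Nontrivial (EuclideanSpace ℝ (Fin d)) :=
    Module.nontrivial_of_finrank_pos (R := ℝ) (by simp; omega)
  refine (integrableOn_fun_norm_addHaar (volume : Measure (EuclideanSpace ℝ (Fin d)))
    (f := fun r : ℝ => (1 - r ^ 2) ^ α)).2 ?_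
  have h1 : IntervalIntegrable (fun y : ℝ => (1 - y) ^ α) volume 0 1 := by
    have := (intervalIntegral.intervalIntegrable_rpow' (a := 1) (b := 0) hα).comp_sub_left 1
    simpa using this
  have h2 : ContinuousOn (fun y : ℝ => y ^ (Module.finrank ℝ (EuclideanSpace ℝ (Fin d)) - 1) *
      (1 + y) ^ α) (uIcc 0 1) := by
    refine (continuous_pow _).continuousOn.mul (ContinuousOn.rpow_const (by fun_prop) ?_)
    intro y hy
    rw [uIcc_of_le zero_le_one] at hy
    left; linarith [hy.1]
  have h3 := h1.continuousOn_mul h2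
  rw [intervalIntegrable_iff_integrableOn_Ioo_of_le zero_le_one] at h3
  refine h3.congr_fun (fun y hy => ?_) measurableSet_Ioo
  have : 1 - y ^ 2 = (1 + y) * (1 - y) := by ring
  simp only [this, smul_eq_mul]
  rw [Real.mul_rpow (by linarith [hy.1]) (by linarith [hy.2])]
  ring

lemma weight_base_pos {x : EuclideanSpace ℝ (Fin d)}
    (hx : x ∈ ball (0 : EuclideanSpace ℝ (Fin d)) 1) :
    0 < 1 - ‖x‖ ^ 2 := by
  have h : ‖x‖ < 1 := by simpa using hx
  nlinarith [norm_nonneg x]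

lemma BddCont.integrableOn (hd : 1 ≤ d) {α : ℝ} (hα : -1 < α)
    {F : EuclideanSpace ℝ (Fin d) → ℝ} (hF : BddCont F) :
    IntegrableOn (fun x => F x * (1 - ‖x‖ ^ 2) ^ α) (ball 0 1) := by
  obtain ⟨C, hC⟩ := hF.2
  refine Integrable.bdd_mul (c := C) (integrableOn_weight_s16 hd hα)
    (hF.1.aestronglyMeasurable measurableSet_ball) ?_
  exact (ae_restrict_iff' measurableSet_ball).2 (Eventually.of_forall fun x hx => hC x hx)

/-- Functions of class `C¹` on the open unit ball that are bounded there together with their first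
partial derivatives. -/
def BddC1 (g : EuclideanSpace ℝ (Fin d) → ℝ) : Prop :=
  ContDiffOn ℝ 1 g (ball 0 1) ∧ BddCont g ∧ ∀ i, BddCont (pd i g)

lemma pd_congr_ball {f g : EuclideanSpace ℝ (Fin d) → ℝ} (h : EqOn f g (ball 0 1)) (i : Fin d) :
    EqOn (pd i f) (pd i g) (ball 0 1) := fun x hx => by
  have : f =ᶠ[𝓝 x] g := by
    filter_upwards [isOpen_ball.mem_nhds hx] with y hy using h hy
  simp only [pd]
  rw [this.fderiv_eq]

lemma uniqueDiffOn_closedBall :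
    UniqueDiffOn ℝ (closedBall (0 : EuclideanSpace ℝ (Fin d)) 1) :=
  uniqueDiffOn_convex (convex_closedBall _ _)
    ((nonempty_ball.2 one_pos).mono ball_subset_interior_closedBall)

lemma pd_eq_fderivWithin (g : EuclideanSpace ℝ (Fin d) → ℝ) (i : Fin d) :
    EqOn (pd i g) (fun x => fderivWithin ℝ g (closedBall 0 1) x (EuclideanSpace.single i 1))
      (ball 0 1) := fun x hx => by
  simp only [pd]
  rw [fderivWithin_of_mem_nhds (mem_of_superset (isOpen_ball.mem_nhds hx) ball_subset_closedBall)]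

lemma BddC1.of_closedBall {g : EuclideanSpace ℝ (Fin d) → ℝ}
    (hg : ContDiffOn ℝ 1 g (closedBall 0 1)) : BddC1 g := by
  refine ⟨hg.mono ball_subset_closedBall, .of_closedBall hg.continuousOn, fun i => ?_⟩
  refine BddCont.congr (.of_closedBall ?_) (pd_eq_fderivWithin g i)
  exact (hg.continuousOn_fderivWithin uniqueDiffOn_closedBall (by simp)).clm_apply
    continuousOn_const

lemma BddC1.congr {f g : EuclideanSpace ℝ (Fin d) → ℝ} (hf : BddC1 f)
    (h : EqOn g f (ball 0 1)) : BddC1 g :=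
  ⟨hf.1.congr h, hf.2.1.congr h, fun i => (hf.2.2 i).congr (pd_congr_ball h i)⟩

lemma BddC1.pd_of_closedBall {q : EuclideanSpace ℝ (Fin d) → ℝ}
    (hq : ContDiffOn ℝ 2 q (closedBall 0 1)) (k : Fin d) : BddC1 (pd k q) := by
  refine BddC1.congr (.of_closedBall ?_) (pd_eq_fderivWithin q k)
  exact (hq.fderivWithin uniqueDiffOn_closedBall (by norm_num)).clm_apply contDiffOn_const

end Analysis

/-! ### Integration by parts on the ball -/

section Divergence
open Metric Set Filter Topology

variable {d : ℕ}

lemma integral_pd_eq_zero {F : EuclideanSpace ℝ (Fin d) → ℝ} (hF : ContDiff ℝ 1 F)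
    (hc : HasCompactSupport F) (i : Fin d) : ∫ x, pd i F x = 0 := by
  have hint : Integrable (fun x => fderiv ℝ F x (EuclideanSpace.single i 1)) :=
    ((hF.continuous_fderiv (by simp)).clm_apply continuous_const).integrable_of_hasCompactSupport
      (hc.fderiv_apply (𝕜 := ℝ) _)
  have hF1 : Integrable F := hF.continuous.integrable_of_hasCompactSupport hc
  have := integral_mul_fderiv_eq_neg_fderiv_mul_of_integrable
    (μ := (volume : Measure (EuclideanSpace ℝ (Fin d)))) (𝕜 := ℝ)
    (f := fun _ => (1 : ℝ)) (g := F) (v := EuclideanSpace.single i 1)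
    (by simp) (by simpa using hint) (by simpa using hF1)
    (fun x _ => by fun_prop) (fun x _ => hF.differentiable (by simp) x)
  simpa [pd] using this

/-- The cutoff profile `H`: smooth, `0` on `(-∞, 1]`, `1` on `[2, ∞)`. -/
noncomputable def cutH (s : ℝ) : ℝ := Real.smoothTransition (s - 1)

lemma contDiff_cutH : ContDiff ℝ 1 cutH :=
  (Real.smoothTransition.contDiff (n := 1)).comp (contDiff_id.sub contDiff_const)

lemma cutH_of_le {s : ℝ} (h : s ≤ 1) : cutH s = 0 :=
  Real.smoothTransition.zero_of_nonpos (by linarith)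

lemma cutH_of_ge {s : ℝ} (h : 2 ≤ s) : cutH s = 1 :=
  Real.smoothTransition.one_of_one_le (by linarith)

lemma abs_cutH_le (s : ℝ) : |cutH s| ≤ 1 := by
  rw [cutH, abs_of_nonneg (Real.smoothTransition.nonneg _)]
  exact Real.smoothTransition.le_one _

lemma deriv_cutH_of_gt {s : ℝ} (h : 2 < s) : deriv cutH s = 0 := by
  have : cutH =ᶠ[𝓝 s] fun _ => 1 := by
    filter_upwards [lt_mem_nhds h] with t ht using cutH_of_ge ht.le
  rw [this.deriv_eq, deriv_const]

lemma deriv_cutH_of_lt {s : ℝ} (h : s < 1) : deriv cutH s = 0 := by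
  have : cutH =ᶠ[𝓝 s] fun _ => 0 := by
    filter_upwards [gt_mem_nhds h] with t ht using cutH_of_le ht.le
  rw [this.deriv_eq, deriv_const]

lemma continuous_mul_deriv_cutH : Continuous fun s => s * deriv cutH s :=
  continuous_id.mul (contDiff_cutH.continuous_deriv (by simp))

lemma exists_bound_mul_deriv_cutH : ∃ K, ∀ s, |s * deriv cutH s| ≤ K := by
  obtain ⟨K, hK⟩ := (isCompact_Icc (a := (1 : ℝ)) (b := 2)).exists_bound_of_continuousOn
    continuous_mul_deriv_cutH.continuousOn
  refine ⟨K, fun s => ?_⟩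
  have hK0 : 0 ≤ K := (norm_nonneg _).trans (hK 1 (by simp))
  rcases lt_or_ge s 1 with h | h
  · simpa [deriv_cutH_of_lt h] using hK0
  rcases lt_or_ge 2 s with h' | h'
  · simpa [deriv_cutH_of_gt h'] using hK0
  · exact hK s ⟨h, h'⟩

lemma pd_comp_weight {φ : ℝ → ℝ} {x : EuclideanSpace ℝ (Fin d)} (i : Fin d)
    (hφ : DifferentiableAt ℝ φ (1 - ‖x‖ ^ 2)) :
    pd i (fun y => φ (1 - ‖y‖ ^ 2)) x = deriv φ (1 - ‖x‖ ^ 2) * (-2 * x i) := by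
  have h1 : HasFDerivAt (fun y : EuclideanSpace ℝ (Fin d) => 1 - ‖y‖ ^ 2)
      (-(2 • innerSL ℝ x)) x := by
    simpa using (hasStrictFDerivAt_norm_sq x).hasFDerivAt.const_sub 1
  have h2 := hφ.hasDerivAt.comp_hasFDerivAt x h1
  have h3 : (φ ∘ fun y : EuclideanSpace ℝ (Fin d) => 1 - ‖y‖ ^ 2)
    = fun y => φ (1 - ‖y‖ ^ 2) := rfl
  rw [h3] at h2
  rw [pd, h2.fderiv]
  simp [EuclideanSpace.inner_single_right]

/-- The truncated weight `t ^ α · H(t N)`, which vanishes for `t ≤ 1 / N`. -/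
noncomputable def cutW (α N t : ℝ) : ℝ := t ^ α * cutH (t * N)

lemma contDiffAt_cutW (α N : ℝ) {t : ℝ} (ht : 0 < t) : ContDiffAt ℝ 1 (cutW α N) t := by
  refine ContDiffAt.mul (contDiffAt_id.rpow_const_of_ne ht.ne') ?_
  exact contDiff_cutH.contDiffAt.comp t (contDiffAt_id.mul contDiffAt_const)

lemma mul_deriv_cutW (α N : ℝ) {t : ℝ} (ht : 0 < t) :
    deriv (cutW α N) t * t
      = (α * cutH (t * N) + (t * N) * deriv cutH (t * N)) * t ^ α := by
  have h1 : HasDerivAt (fun t : ℝ => t ^ α) (α * t ^ (α - 1)) t :=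
    Real.hasDerivAt_rpow_const (Or.inl ht.ne')
  have h2 : HasDerivAt (fun t : ℝ => cutH (t * N)) (deriv cutH (t * N) * N) t := by
    have h := (contDiff_cutH.differentiable (by simp) (t * N)).hasDerivAt
    have h' : HasDerivAt (fun t : ℝ => t * N) N t := by
      simpa using (hasDerivAt_id t).mul_const N
    exact HasDerivAt.comp (h₂ := cutH) t h h'
  have h3 : deriv (cutW α N) t = _ := (h1.mul h2).deriv
  rw [h3]
  have h4 : t ^ α = t ^ (α - 1) * t := by
    rw [Real.rpow_sub_one ht.ne']; field_simp
  simp only [h4]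
  ring

lemma eventually_cutW_eq_zero {N : ℝ} (hN : 0 < N) (α : ℝ) {x : EuclideanSpace ℝ (Fin d)}
    (hx : x ∉ ball (0 : EuclideanSpace ℝ (Fin d)) 1) :
    ∀ᶠ y in 𝓝 x, cutW α N (1 - ‖y‖ ^ 2) = 0 := by
  have h1 : 1 ≤ ‖x‖ := by simpa using hx
  have h2 : (1 - ‖x‖ ^ 2) * N < 1 := by
    have : 1 - ‖x‖ ^ 2 ≤ 0 := by nlinarith
    nlinarith
  have hc : Continuous fun y : EuclideanSpace ℝ (Fin d) => (1 - ‖y‖ ^ 2) * N := by fun_prop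
  filter_upwards [hc.continuousAt.eventually (gt_mem_nhds h2)] with y hy
  rw [cutW, cutH_of_le (le_of_lt hy), mul_zero]

/-- Integration by parts against the truncated weight; `V` is tangential to the sphere in the sense
that `x · V` is divisible by `1 - ‖x‖²`. -/
lemma integral_cut_eq_zero {α : ℝ} {N : ℝ} (hN : 0 < N)
    (V : Fin d → MvPolynomial (Fin d) ℝ) (h : MvPolynomial (Fin d) ℝ)
    (hV : ∀ x : EuclideanSpace ℝ (Fin d),
      ∑ l, x l * polyFun (V l) x = (1 - ‖x‖ ^ 2) * polyFun h x)
    {g : EuclideanSpace ℝ (Fin d) → ℝ} (hg : BddC1 g) :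
    ∫ x in ball (0 : EuclideanSpace ℝ (Fin d)) 1,
      (cutH ((1 - ‖x‖ ^ 2) * N) * ((∑ l, polyFun (V l) x * pd l g x)
        + g x * (∑ l, polyFun (MvPolynomial.pderiv l (V l)) x) - 2 * α * polyFun h x * g x)
        - 2 * (((1 - ‖x‖ ^ 2) * N) * deriv cutH ((1 - ‖x‖ ^ 2) * N)) * (polyFun h x * g x))
        * (1 - ‖x‖ ^ 2) ^ α = 0 := by
  set F : Fin d → EuclideanSpace ℝ (Fin d) → ℝ := fun l x =>
    cutW α N (1 - ‖x‖ ^ 2) * g x * polyFun (V l) x with hF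
  have hzero : ∀ l, ∀ x ∉ ball (0 : EuclideanSpace ℝ (Fin d)) 1, F l =ᶠ[𝓝 x] fun _ => 0 := by
    intro l x hx
    filter_upwards [eventually_cutW_eq_zero hN α hx] with y hy
    simp [hF, hy]
  have hu : ∀ x ∈ ball (0 : EuclideanSpace ℝ (Fin d)) 1,
      ContDiffAt ℝ 1 (fun x : EuclideanSpace ℝ (Fin d) => cutW α N (1 - ‖x‖ ^ 2)) x := by
    intro x hx
    exact (contDiffAt_cutW α N (weight_base_pos hx)).comp x
      (contDiffAt_const.sub (contDiff_norm_sq ℝ).contDiffAt)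
  have hgx : ∀ x ∈ ball (0 : EuclideanSpace ℝ (Fin d)) 1, ContDiffAt ℝ 1 g x := fun x hx =>
    hg.1.contDiffAt (isOpen_ball.mem_nhds hx)
  have hcd : ∀ l, ContDiff ℝ 1 (F l) := by
    intro l
    refine contDiff_iff_contDiffAt.2 fun x => ?_
    by_cases hx : x ∈ ball (0 : EuclideanSpace ℝ (Fin d)) 1
    · exact ((hu x hx).mul (hgx x hx)).mul (contDiff_polyFun _ _).contDiffAt
    · exact contDiffAt_const.congr_of_eventuallyEq (hzero l x hx)
  have hcs : ∀ l, HasCompactSupport (F l) := fun l =>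
    HasCompactSupport.intro (isCompact_closedBall (0 : EuclideanSpace ℝ (Fin d)) 1) fun x hx =>
      (hzero l x fun h' => hx (ball_subset_closedBall h')).self_of_nhds
  have hI : ∀ l, ∫ x in ball (0 : EuclideanSpace ℝ (Fin d)) 1, pd l (F l) x = 0 := by
    intro l
    rw [setIntegral_eq_integral_of_forall_compl_eq_zero]
    · exact integral_pd_eq_zero (hcd l) (hcs l) l
    · intro x hx
      rw [pd, (hzero l x hx).fderiv_eq]
      simp
  have hint : ∀ l, IntegrableOn (pd l (F l)) (ball (0 : EuclideanSpace ℝ (Fin d)) 1) := fun l =>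
    ((((hcd l).continuous_fderiv (by simp)).clm_apply
      continuous_const).integrable_of_hasCompactSupport
      ((hcs l).fderiv_apply (𝕜 := ℝ) _)).integrableOn
  have hS : ∫ x in ball (0 : EuclideanSpace ℝ (Fin d)) 1, ∑ l, pd l (F l) x = 0 := by
    rw [integral_finsetSum _ fun l _ => hint l]
    exact Finset.sum_eq_zero fun l _ => hI l
  rw [← hS]
  refine setIntegral_congr_fun measurableSet_ball fun x hx => ?_
  have hw := weight_base_pos hx
  have hpd : ∀ l, pd l (F l) x = deriv (cutW α N) (1 - ‖x‖ ^ 2) * (-2 * x l) * g x * polyFun (V l) x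
      + cutW α N (1 - ‖x‖ ^ 2) * pd l g x * polyFun (V l) x
      + cutW α N (1 - ‖x‖ ^ 2) * g x * polyFun (MvPolynomial.pderiv l (V l)) x := by
    intro l
    have d1 := (hu x hx).differentiableAt (by simp)
    have d2 := (hgx x hx).differentiableAt (by simp)
    have d3 := (contDiff_polyFun (V l) 1).differentiable (by simp) x
    simp only [hF]
    rw [pd_mul l (d1.fun_mul d2) d3, pd_mul l d1 d2,
      pd_comp_weight l ((contDiffAt_cutW α N hw).differentiableAt (by simp)), pd_polyFun]
    ring
  have hsum : ∑ l, pd l (F l) x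
      = -2 * (deriv (cutW α N) (1 - ‖x‖ ^ 2) * (∑ l, x l * polyFun (V l) x)) * g x
        + cutW α N (1 - ‖x‖ ^ 2) * (∑ l, polyFun (V l) x * pd l g x)
        + cutW α N (1 - ‖x‖ ^ 2) * g x * ∑ l, polyFun (MvPolynomial.pderiv l (V l)) x := by
    simp only [Finset.mul_sum, Finset.sum_mul, ← Finset.sum_add_distrib]
    refine Finset.sum_congr rfl fun l _ => ?_
    rw [hpd]; ring
  rw [hsum, hV, ← mul_assoc (deriv _ _), mul_deriv_cutW α N hw, cutW]
  ring

/-- Integration by parts on the ball against `W_α`: the cutoff error `s · dH/ds`, `s = N (1 - ‖x‖²)`,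
is bounded and tends to `0` pointwise. -/
lemma integral_div_eq_zero (hd : 1 ≤ d) {α : ℝ} (hα : -1 < α)
    (V : Fin d → MvPolynomial (Fin d) ℝ) (h : MvPolynomial (Fin d) ℝ)
    (hV : ∀ x : EuclideanSpace ℝ (Fin d),
      ∑ l, x l * polyFun (V l) x = (1 - ‖x‖ ^ 2) * polyFun h x)
    {g : EuclideanSpace ℝ (Fin d) → ℝ} (hg : BddC1 g) :
    ∫ x in ball (0 : EuclideanSpace ℝ (Fin d)) 1,
      ((∑ l, polyFun (V l) x * pd l g x)
        + g x * (∑ l, polyFun (MvPolynomial.pderiv l (V l)) x) - 2 * α * polyFun h x * g x)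
        * (1 - ‖x‖ ^ 2) ^ α = 0 := by
  set A : EuclideanSpace ℝ (Fin d) → ℝ := fun x => (∑ l, polyFun (V l) x * pd l g x)
        + g x * (∑ l, polyFun (MvPolynomial.pderiv l (V l)) x) - 2 * α * polyFun h x * g x with hA
  set B : EuclideanSpace ℝ (Fin d) → ℝ := fun x => polyFun h x * g x with hB
  have bA : BddCont A := by
    refine ((BddCont.sum _ fun l _ => (BddCont.polyFun _).mul (hg.2.2 l)).add
      (hg.2.1.mul (BddCont.sum _ fun l _ => BddCont.polyFun _))).sub
      (((BddCont.const (2 * α)).mul (BddCont.polyFun h)).mul hg.2.1)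
  have bB : BddCont B := (BddCont.polyFun h).mul hg.2.1
  obtain ⟨CA, hCA⟩ := bA.2
  obtain ⟨CB, hCB⟩ := bB.2
  obtain ⟨K, hK⟩ := exists_bound_mul_deriv_cutH
  set G : ℕ → EuclideanSpace ℝ (Fin d) → ℝ := fun m x =>
    (cutH ((1 - ‖x‖ ^ 2) * (m + 1)) * A x
      - 2 * (((1 - ‖x‖ ^ 2) * (m + 1)) * deriv cutH ((1 - ‖x‖ ^ 2) * (m + 1))) * B x)
        * (1 - ‖x‖ ^ 2) ^ α with hG
  have hG0 : ∀ m, ∫ x in ball (0 : EuclideanSpace ℝ (Fin d)) 1, G m x = 0 := fun m =>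
    integral_cut_eq_zero (N := (m : ℝ) + 1) (by positivity) V h hV hg
  have hc : ∀ m : ℕ, Continuous fun x : EuclideanSpace ℝ (Fin d) =>
      (1 - ‖x‖ ^ 2) * ((m : ℝ) + 1) := fun m => by fun_prop
  have hlim : Tendsto (fun m => ∫ x in ball (0 : EuclideanSpace ℝ (Fin d)) 1, G m x) atTop
      (𝓝 (∫ x in ball (0 : EuclideanSpace ℝ (Fin d)) 1, A x * (1 - ‖x‖ ^ 2) ^ α)) := by
    refine tendsto_integral_of_dominated_convergence
      (fun x => (CA + 2 * K * CB) * (1 - ‖x‖ ^ 2) ^ α) ?_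
      ((integrableOn_weight_s16 hd hα).const_mul _) ?_ ?_
    · intro m
      have hw : AEStronglyMeasurable (fun x : EuclideanSpace ℝ (Fin d) => (1 - ‖x‖ ^ 2) ^ α)
        (volume.restrict (ball 0 1)) := (integrableOn_weight_s16 hd hα).aestronglyMeasurable
      refine AEStronglyMeasurable.mul ?_ hw
      refine ContinuousOn.aestronglyMeasurable ?_ measurableSet_ball
      refine ((contDiff_cutH.continuous.comp (hc m)).continuousOn.mul bA.1).sub
        ((continuousOn_const.mul ?_).mul bB.1)
      exact (continuous_mul_deriv_cutH.comp (hc m)).continuousOn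
    · intro m
      refine (ae_restrict_iff' measurableSet_ball).2 (Eventually.of_forall fun x hx => ?_)
      have hw := weight_base_pos hx
      simp only [hG]
      rw [norm_mul, Real.norm_of_nonneg (Real.rpow_nonneg hw.le α)]
      refine mul_le_mul_of_nonneg_right ?_ (Real.rpow_nonneg hw.le α)
      refine (norm_sub_le _ _).trans (add_le_add ?_ ?_)
      · rw [norm_mul]
        calc _ ≤ 1 * CA := mul_le_mul (abs_cutH_le _) (hCA x hx) (abs_nonneg _) zero_le_one
          _ = CA := one_mul _
      · rw [norm_mul, norm_mul, Real.norm_two]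
        have hK0 := (abs_nonneg _).trans (hK 0)
        exact mul_le_mul (mul_le_mul_of_nonneg_left (hK _) zero_le_two) (hCB x hx)
          (abs_nonneg _) (by positivity)
    · refine (ae_restrict_iff' measurableSet_ball).2 (Eventually.of_forall fun x hx => ?_)
      have hw := weight_base_pos hx
      refine tendsto_const_nhds.congr' ?_
      obtain ⟨m0, hm0⟩ := exists_nat_gt (2 / (1 - ‖x‖ ^ 2))
      filter_upwards [eventually_ge_atTop m0] with m hm
      have h2 : 2 < (1 - ‖x‖ ^ 2) * ((m : ℝ) + 1) := by
        rw [div_lt_iff₀ hw] at hm0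
        have : (m0 : ℝ) ≤ m := by exact_mod_cast hm
        nlinarith
      simp only [hG]
      rw [cutH_of_ge h2.le, deriv_cutH_of_gt h2]
      ring
  simp only [hG0] at hlim
  exact (tendsto_nhds_unique hlim tendsto_const_nhds)

end Divergence

/-! ### The form `B^α` and the gradient form -/

section SturmLiouville
open Metric Set Filter Topology

variable {d : ℕ}

lemma polyFun_eulerOp (f : MvPolynomial (Fin d) ℝ) (x : EuclideanSpace ℝ (Fin d)) :
    polyFun (eulerOp f) x = ∑ l, x l * pd l (polyFun f) x := by
  simp only [pd_polyFun]
  simp [polyFun, eulerOp]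

/-- Lagrange's identity `Σ_{i<j} (x_i a_j - x_j a_i)(x_i b_j - x_j b_i) = |x|² a·b - (x·a)(x·b)`. -/
lemma sum_lt_lagrange (x a b : Fin d → ℝ) :
    ∑ i, ∑ j, (if i < j then (x i * a j - x j * a i) * (x i * b j - x j * b i) else 0)
      = (∑ i, x i ^ 2) * (∑ i, a i * b i) - (∑ i, x i * a i) * (∑ i, x i * b i) := by
  set T : Fin d → Fin d → ℝ := fun i j => (x i * a j - x j * a i) * (x i * b j - x j * b i) with hT
  have h1 : ∑ i, ∑ j, T i j
      = ∑ i, ∑ j, (if i < j then T i j else 0) + ∑ i, ∑ j, (if j < i then T i j else 0) := by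
    simp only [← Finset.sum_add_distrib]
    refine Finset.sum_congr rfl fun i _ => Finset.sum_congr rfl fun j _ => ?_
    rcases lt_trichotomy i j with h | h | h
    · simp [h, h.not_gt]
    · subst h; simp [hT]
    · simp [h, h.not_gt]
  have h2 : ∑ i, ∑ j, (if j < i then T i j else 0) = ∑ i, ∑ j, (if i < j then T i j else 0) := by
    rw [Finset.sum_comm]
    refine Finset.sum_congr rfl fun i _ => Finset.sum_congr rfl fun j _ => ?_
    split_ifs
    · simp only [hT]; ring
    · rfl
  have h3 : ∑ i, ∑ j, T i j = 2 * ((∑ i, x i ^ 2) * (∑ i, a i * b i)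
      - (∑ i, x i * a i) * (∑ i, x i * b i)) := by
    have e : ∀ i j, T i j = x i ^ 2 * (a j * b j) - (x i * a i) * (x j * b j)
        - (x i * b i) * (x j * a j) + (a i * b i) * (x j ^ 2) := fun i j => by
      simp only [hT]; ring
    simp only [e, Finset.sum_add_distrib, Finset.sum_sub_distrib, ← Finset.mul_sum,
      ← Finset.sum_mul]
    ring
  linarith

lemma BddCont.Dop {g : EuclideanSpace ℝ (Fin d) → ℝ} (hg : BddC1 g) (i j : Fin d) :
    BddCont (Dop i j g) :=
  ((BddCont.coord i).mul (hg.2.2 j)).sub ((BddCont.coord j).mul (hg.2.2 i))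

lemma BddC1.polyFun (f : MvPolynomial (Fin d) ℝ) : BddC1 (polyFun f) :=
  .of_closedBall (contDiff_polyFun f 1).contDiffOn

/-- The form `B^α` with its gradient and angular parts merged into one integral. -/
lemma Bform_eq (hd : 1 ≤ d) {α : ℝ} (hα : -1 < α) {f g : EuclideanSpace ℝ (Fin d) → ℝ}
    (hf : BddC1 f) (hg : BddC1 g) :
    Bform α f g = ∫ x in ball (0 : EuclideanSpace ℝ (Fin d)) 1,
      ((∑ l, pd l f x * pd l g x) - (∑ l, x l * pd l f x) * (∑ l, x l * pd l g x))
        * (1 - ‖x‖ ^ 2) ^ α := by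
  have hD : ∀ i j : Fin d, IntegrableOn (fun x => if i < j then
      Dop i j f x * Dop i j g x * (1 - ‖x‖ ^ 2) ^ α else 0)
      (ball (0 : EuclideanSpace ℝ (Fin d)) 1) := by
    intro i j
    by_cases h : i < j
    · simpa [h] using ((BddCont.Dop hf i j).mul (BddCont.Dop hg i j)).integrableOn hd hα
    · simp [h]
  have h1 : (∑ i : Fin d, ∑ j : Fin d,
        if i < j then
          ∫ x in ball (0 : EuclideanSpace ℝ (Fin d)) 1,
            Dop i j f x * Dop i j g x * (1 - ‖x‖ ^ 2) ^ α
        else 0) = ∫ x in ball (0 : EuclideanSpace ℝ (Fin d)) 1, ∑ i : Fin d, ∑ j : Fin d,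
        if i < j then Dop i j f x * Dop i j g x * (1 - ‖x‖ ^ 2) ^ α else 0 := by
    rw [integral_finsetSum _ fun i _ => integrable_finsetSum _ fun j _ => hD i j]
    refine Finset.sum_congr rfl fun i _ => ?_
    rw [integral_finsetSum _ fun j _ => hD i j]
    refine Finset.sum_congr rfl fun j _ => ?_
    split_ifs <;> simp
  have hgr : BddCont fun x => ∑ l, pd l f x * pd l g x :=
    BddCont.sum _ fun l _ => (hf.2.2 l).mul (hg.2.2 l)
  have hwt : BddCont fun x : EuclideanSpace ℝ (Fin d) => 1 - ‖x‖ ^ 2 :=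
    .of_continuous (by fun_prop)
  have h2 : ∫ x in ball (0 : EuclideanSpace ℝ (Fin d)) 1,
      (∑ i : Fin d, pd i f x * pd i g x) * (1 - ‖x‖ ^ 2) ^ (α + 1)
      = ∫ x in ball (0 : EuclideanSpace ℝ (Fin d)) 1,
      ((∑ i : Fin d, pd i f x * pd i g x) * (1 - ‖x‖ ^ 2)) * (1 - ‖x‖ ^ 2) ^ α := by
    refine setIntegral_congr_fun measurableSet_ball fun x hx => ?_
    have hw := weight_base_pos hx
    simp only [Real.rpow_add_one hw.ne']
    ring
  rw [Bform, h1, h2, ← integral_add ((hgr.mul hwt).integrableOn hd hα)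
    (integrable_finsetSum _ fun i _ => integrable_finsetSum _ fun j _ => hD i j)]
  congr 1
  ext x
  have hs : (∑ i : Fin d, ∑ j : Fin d,
        if i < j then Dop i j f x * Dop i j g x * (1 - ‖x‖ ^ 2) ^ α else 0)
      = (∑ i : Fin d, ∑ j : Fin d,
        if i < j then Dop i j f x * Dop i j g x else 0) * (1 - ‖x‖ ^ 2) ^ α := by
    simp only [Finset.sum_mul, ite_mul, zero_mul]
  have hL := sum_lt_lagrange (fun i => x i) (fun i => pd i f x) (fun i => pd i g x)
  simp only [Dop] at hs ⊢
  rw [hs, hL, EuclideanSpace.real_norm_sq_eq]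
  ring

/-- The weak form of `L` on polynomials: `B^α(f, g) = ⟨L f, g⟩_α`. -/
lemma Bform_polyFun (hd : 1 ≤ d) {α : ℝ} (hα : -1 < α) (f : MvPolynomial (Fin d) ℝ)
    {g : EuclideanSpace ℝ (Fin d) → ℝ} (hg : BddC1 g) :
    Bform α (polyFun f) g = ∫ x in ball (0 : EuclideanSpace ℝ (Fin d)) 1,
      polyFun (slOp (d + 2 * α) f) x * g x * (1 - ‖x‖ ^ 2) ^ α := by
  -- the integrand of `B^α(f, g)` is `V · ∇g` for the vector field `V = ∇f - (E f) x`
  set V : Fin d → MvPolynomial (Fin d) ℝ := fun l =>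
    MvPolynomial.pderiv l f - MvPolynomial.X l * eulerOp f with hVdef
  have hVx : ∀ l (x : EuclideanSpace ℝ (Fin d)),
      polyFun (V l) x = pd l (polyFun f) x - x l * polyFun (eulerOp f) x := fun l x => by
    rw [pd_polyFun]; simp [hVdef, polyFun]
  have hV : ∀ x : EuclideanSpace ℝ (Fin d),
      ∑ l, x l * polyFun (V l) x = (1 - ‖x‖ ^ 2) * polyFun (eulerOp f) x := by
    intro x
    have e : ∀ l, x l * polyFun (V l) x = x l * pd l (polyFun f) x
        - x l ^ 2 * polyFun (eulerOp f) x := fun l => by rw [hVx]; ring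
    simp only [e, Finset.sum_sub_distrib, ← Finset.sum_mul, ← polyFun_eulerOp]
    rw [EuclideanSpace.real_norm_sq_eq]
    ring
  have hdiv : ∑ l, MvPolynomial.pderiv l (V l)
      = lapOp f - (d : MvPolynomial (Fin d) ℝ) * eulerOp f - eulerOp (eulerOp f) := by
    simp only [hVdef, map_sub, MvPolynomial.pderiv_mul, MvPolynomial.pderiv_X_self, one_mul,
      Finset.sum_sub_distrib, Finset.sum_add_distrib, Finset.sum_const, Finset.card_univ,
      Fintype.card_fin, nsmul_eq_mul]
    rw [show eulerOp (eulerOp f) = ∑ l, MvPolynomial.X l * MvPolynomial.pderiv l (eulerOp f)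
      from rfl, show lapOp f = ∑ l, MvPolynomial.pderiv l (MvPolynomial.pderiv l f) from rfl]
    ring
  have hdivx : ∀ x : EuclideanSpace ℝ (Fin d),
      ∑ l, polyFun (MvPolynomial.pderiv l (V l)) x
        = -polyFun (slOp (d + 2 * α) f) x + 2 * α * polyFun (eulerOp f) x := by
    intro x
    have := congrArg (fun p => polyFun p x) hdiv
    simp only [polyFun, map_sum, map_sub, map_mul, map_natCast] at this ⊢
    rw [this]
    simp [slOp]
    ring
  have key := integral_div_eq_zero hd hα V (eulerOp f) hV hg
  have i1 : IntegrableOn (fun x => (∑ l, polyFun (V l) x * pd l g x) * (1 - ‖x‖ ^ 2) ^ α)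
      (ball (0 : EuclideanSpace ℝ (Fin d)) 1) :=
    (BddCont.sum _ fun l _ => (BddCont.polyFun _).mul (hg.2.2 l)).integrableOn hd hα
  have i2 : IntegrableOn (fun x => polyFun (slOp (d + 2 * α) f) x * g x * (1 - ‖x‖ ^ 2) ^ α)
      (ball (0 : EuclideanSpace ℝ (Fin d)) 1) :=
    ((BddCont.polyFun _).mul hg.2.1).integrableOn hd hα
  rw [Bform_eq hd hα (.polyFun f) hg, ← sub_eq_zero]
  have e1 : ∫ x in ball (0 : EuclideanSpace ℝ (Fin d)) 1,
      ((∑ l, pd l (polyFun f) x * pd l g x)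
        - (∑ l, x l * pd l (polyFun f) x) * (∑ l, x l * pd l g x)) * (1 - ‖x‖ ^ 2) ^ α
      = ∫ x in ball (0 : EuclideanSpace ℝ (Fin d)) 1,
        (∑ l, polyFun (V l) x * pd l g x) * (1 - ‖x‖ ^ 2) ^ α := by
    congr 1
    ext x
    congr 1
    rw [← polyFun_eulerOp, Finset.mul_sum, ← Finset.sum_sub_distrib]
    refine Finset.sum_congr rfl fun l _ => ?_
    rw [hVx]; ring
  rw [e1, ← integral_sub i1 i2, ← key]
  congr 1
  ext x
  rw [hdivx]
  ring

/-- The gradient part `⟨∇f, ∇g⟩_α` of the Sobolev inner product. -/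
noncomputable def gradF (α : ℝ) (f g : EuclideanSpace ℝ (Fin d) → ℝ) : ℝ :=
  ∫ x in ball (0 : EuclideanSpace ℝ (Fin d)) 1,
    (∑ i : Fin d, pd i f x * pd i g x) * (1 - ‖x‖ ^ 2) ^ α

lemma gradF_comm (α : ℝ) (f g : EuclideanSpace ℝ (Fin d) → ℝ) : gradF α f g = gradF α g f := by
  simp only [gradF, mul_comm (pd _ f _)]

lemma Bform_comm (α : ℝ) (f g : EuclideanSpace ℝ (Fin d) → ℝ) : Bform α f g = Bform α g f := by
  simp only [Bform, mul_comm (pd _ f _), mul_comm (Dop _ _ f _)]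

/-- `Σ_k B^α(∂_k p, ∂_k q) = ⟨∇(M p), ∇q⟩_α`. -/
lemma sum_Bform_pd (hd : 1 ≤ d) {α : ℝ} (hα : -1 < α) (p : MvPolynomial (Fin d) ℝ)
    {q : EuclideanSpace ℝ (Fin d) → ℝ} (hq : ∀ k, BddC1 (pd k q)) :
    ∑ k, Bform α (pd k (polyFun p)) (pd k q)
      = gradF α (polyFun (liftOp (d + 2 * α) p)) q := by
  simp only [gradF, Finset.sum_mul]
  rw [integral_finsetSum]
  · refine Finset.sum_congr rfl fun k _ => ?_
    rw [pd_polyFun, Bform_polyFun hd hα _ (hq k), pd_polyFun, pderiv_liftOp]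
  · intro k _
    rw [pd_polyFun]
    exact ((BddCont.polyFun _).mul (hq k).2.1).integrableOn hd hα

lemma gradF_polyFun_sub_C_mul (hd : 1 ≤ d) {α : ℝ} (hα : -1 < α)
    (p r : MvPolynomial (Fin d) ℝ) (a : ℝ)
    {q : EuclideanSpace ℝ (Fin d) → ℝ} (hq : ∀ k, BddCont (pd k q)) :
    gradF α (polyFun (p - MvPolynomial.C a * r)) q
      = gradF α (polyFun p) q - a * gradF α (polyFun r) q := by
  have hi : ∀ s : MvPolynomial (Fin d) ℝ, IntegrableOn (fun x =>
      (∑ i : Fin d, pd i (polyFun s) x * pd i q x) * (1 - ‖x‖ ^ 2) ^ α)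
      (ball (0 : EuclideanSpace ℝ (Fin d)) 1) := fun s => by
    simp only [pd_polyFun]
    exact (BddCont.sum _ fun l _ => (BddCont.polyFun _).mul (hq l)).integrableOn hd hα
  rw [gradF, gradF, gradF, ← integral_const_mul, ← integral_sub (hi p) ((hi r).const_mul a)]
  congr 1
  ext x
  have : ∀ i, pd i (polyFun (p - MvPolynomial.C a * r)) x
      = pd i (polyFun p) x - a * pd i (polyFun r) x := fun i => by
    simp only [pd_polyFun, map_sub, MvPolynomial.pderiv_C_mul]
    simp [polyFun]
  simp only [this, sub_mul, Finset.sum_sub_distrib, mul_assoc, ← Finset.mul_sum]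

/-- A polynomial whose gradient has zero norm is `⟨∇·, ∇·⟩_α`-orthogonal to everything. -/
lemma gradF_eq_zero_of_self (hd : 1 ≤ d) {α : ℝ} (hα : -1 < α) (s : MvPolynomial (Fin d) ℝ)
    (hs : gradF α (polyFun s) (polyFun s) = 0) (q : EuclideanSpace ℝ (Fin d) → ℝ) :
    gradF α (polyFun s) q = 0 := by
  have hi : IntegrableOn (fun x =>
      (∑ i : Fin d, pd i (polyFun s) x * pd i (polyFun s) x) * (1 - ‖x‖ ^ 2) ^ α)
      (ball (0 : EuclideanSpace ℝ (Fin d)) 1) := by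
    simp only [pd_polyFun]
    exact (BddCont.sum _ fun l _ => (BddCont.polyFun _).mul (BddCont.polyFun _)).integrableOn hd hα
  have hnn : 0 ≤ᵐ[volume.restrict (ball (0 : EuclideanSpace ℝ (Fin d)) 1)] fun x =>
      (∑ i : Fin d, pd i (polyFun s) x * pd i (polyFun s) x) * (1 - ‖x‖ ^ 2) ^ α :=
    (ae_restrict_iff' measurableSet_ball).2 (Eventually.of_forall fun x hx =>
      mul_nonneg (Finset.sum_nonneg fun i _ => mul_self_nonneg _)
        (Real.rpow_nonneg (weight_base_pos hx).le _))
  have h0 := (integral_eq_zero_iff_of_nonneg_ae hnn hi).1 hs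
  rw [gradF]
  refine integral_eq_zero_of_ae ?_
  filter_upwards [h0, ae_restrict_mem measurableSet_ball] with x hx hxb
  have hw := Real.rpow_pos_of_pos (weight_base_pos hxb) α
  have h1 : ∑ i : Fin d, pd i (polyFun s) x * pd i (polyFun s) x = 0 :=
    (mul_eq_zero.1 hx).resolve_right hw.ne'
  have h2 := (Finset.sum_eq_zero_iff_of_nonneg fun i _ => mul_self_nonneg _).1 h1
  have h3 : ∀ i, pd i (polyFun s) x = 0 := fun i => mul_self_eq_zero.1 (h2 i (Finset.mem_univ i))
  simp [h3]

lemma sobF_eq (α : ℝ) (f g : EuclideanSpace ℝ (Fin d) → ℝ) :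
    sobF α f g = gradF α f g + lebF α f (fun _ => 1) * lebF α g (fun _ => 1)
      / lebF (d := d) α (fun _ => 1) (fun _ => 1) := rfl

lemma gradF_const_right (α a : ℝ) (f : EuclideanSpace ℝ (Fin d) → ℝ) :
    gradF α f (fun _ => a) = 0 := by
  simp [gradF, pd]

end SturmLiouville

/-- Weak Sturm–Liouville problem satisfied by the `(α,1)`-orthogonal polynomials:
`Σ_k B^α(∂_k p_n, ∂_k q) = λ^{(α,1)}_n ⟨p_n, q⟩_{α,1}` for `q ∈ C²` of the closed ball,
with `λ^{(α,1)}_n = 0` for `n ≤ 1` and `(n−1)(n−1+d+2α)` for `n ≥ 2`. -/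
theorem stmt16 {d : ℕ} (hd : 1 ≤ d) (α : ℝ) (hα : -1 < α) (n : ℕ)
    (p : MvPolynomial (Fin d) ℝ) (hdeg : p.totalDegree ≤ n)
    (horth : ∀ r : MvPolynomial (Fin d) ℝ, r.totalDegree < n →
      sobF α (fun x => MvPolynomial.eval (fun t => x t) p)
        (fun x => MvPolynomial.eval (fun t => x t) r) = 0)
    (q : EuclideanSpace ℝ (Fin d) → ℝ)
    (hq : ContDiffOn ℝ 2 q (Metric.closedBall 0 1)) :
    (∑ k : Fin d, Bform α
        (fun y => pd k (fun x => MvPolynomial.eval (fun t => x t) p) y)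
        (fun y => pd k q y))
      = (if n ≤ 1 then (0 : ℝ) else ((n : ℝ) - 1) * ((n : ℝ) - 1 + (d : ℝ) + 2 * α)) *
          sobF α (fun x => MvPolynomial.eval (fun t => x t) p) q := by
  have hq2 : ∀ k, BddC1 (pd k q) := BddC1.pd_of_closedBall hq
  have hp2 : ∀ (r : MvPolynomial (Fin d) ℝ) k, BddC1 (pd k (polyFun r)) := fun r =>
    BddC1.pd_of_closedBall (contDiff_polyFun r 2).contDiffOn
  change ∑ k : Fin d, Bform α (pd k (polyFun p)) (pd k q) = _ * sobF α (polyFun p) q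
  change ∀ r : MvPolynomial (Fin d) ℝ, r.totalDegree < n →
    sobF α (polyFun p) (polyFun r) = 0 at horth
  rcases Nat.eq_zero_or_pos n with hn | hn
  · -- constants: both sides vanish
    subst hn
    have hC := MvPolynomial.totalDegree_eq_zero_iff_eq_C.1 (Nat.le_zero.1 hdeg)
    rw [sum_Bform_pd hd hα p hq2]
    have : gradF α (polyFun (liftOp (d + 2 * α) p)) q = 0 := by
      rw [hC]
      have e : polyFun (liftOp ((d : ℝ) + 2 * α) (MvPolynomial.C (p.coeff 0)))
          = fun _ : EuclideanSpace ℝ (Fin d) => (1 - ((d : ℝ) + 2 * α)) * p.coeff 0 := by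
        ext x
        simp [polyFun, liftOp, lapOp, eulerOp]
      rw [e, gradF_comm, gradF_const_right]
    simp [this]
  set lam : ℝ := ((n : ℝ) - 1) * ((n : ℝ) - 1 + (d + 2 * α)) with hlam
  have hlamIf : (if n ≤ 1 then (0 : ℝ)
      else ((n : ℝ) - 1) * ((n : ℝ) - 1 + (d : ℝ) + 2 * α)) = lam := by
    split_ifs with h
    · have : n = 1 := by omega
      simp [hlam, this]
    · rw [hlam]; ring
  rw [hlamIf]
  -- orthogonality to the constant `1` kills the mean-value part of the inner product
  have hmean : ∀ g : EuclideanSpace ℝ (Fin d) → ℝ, sobF α (polyFun p) g = gradF α (polyFun p) g := by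
    intro g
    have h1 := horth 1 (by simpa using hn)
    have e : polyFun (1 : MvPolynomial (Fin d) ℝ) = fun _ => 1 := by ext x; simp [polyFun]
    rw [e, sobF_eq, gradF_const_right, zero_add, div_eq_zero_iff, mul_eq_zero] at h1
    rw [sobF_eq]
    rcases h1 with (h1 | h1) | h1 <;> simp [h1]
  simp only [hmean] at horth ⊢
  have hdegM : ∀ r : MvPolynomial (Fin d) ℝ, r.totalDegree ≤ n →
      (liftOp ((d : ℝ) + 2 * α) r - MvPolynomial.C lam * r).totalDegree < n := fun r hr =>
    totalDegree_liftOp_sub_lt _ n hn r hr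
  have hsub : ∀ (r : MvPolynomial (Fin d) ℝ) (g : EuclideanSpace ℝ (Fin d) → ℝ),
      (∀ k, BddC1 (pd k g)) →
      gradF α (polyFun (liftOp ((d : ℝ) + 2 * α) r - MvPolynomial.C lam * r)) g
        = (∑ k, Bform α (pd k (polyFun r)) (pd k g)) - lam * gradF α (polyFun r) g := by
    intro r g hg
    rw [gradF_polyFun_sub_C_mul hd hα _ _ _ fun k => (hg k).2.1, sum_Bform_pd hd hα r hg]
  set s := liftOp ((d : ℝ) + 2 * α) p - MvPolynomial.C lam * p with hs
  -- `M - λ` is symmetric and `(M - λ) s` has degree `< n`, so `⟨∇s, ∇s⟩ = ⟨∇p, ∇(M - λ)s⟩ = 0`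
  have hself : gradF α (polyFun s) (polyFun s) = 0 := by
    have h1 := hsub p (polyFun s) (hp2 s)
    have h2 := hsub s (polyFun p) (hp2 p)
    rw [gradF_comm, horth _ (hdegM s (hdegM p hdeg).le)] at h2
    simp only [Bform_comm α (pd _ (polyFun s))] at h2
    rw [gradF_comm α (polyFun s) (polyFun p)] at h2
    rw [h1, ← h2]
  have h0 := gradF_eq_zero_of_self hd hα s hself q
  rw [hsub p q hq2] at h0
  linarith
end
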